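/- Fix s₁ = σ₁ + it₁ with σ₁ = 1, s₁ ≠ 1, σ₂ = 1/2, avoiding singularities of ζ₂. Then ∫₂^T |ζ₂(s₁, 1/2 + it₂)|² dt₂ = (|s₁ − 1|^{-2} + |ζ(s₁)|²) T log T + O(T). -/

import Mathlib

open Complex Filter Asymptotics Real

/-- The singular set of the Euler double zeta function: `s₂ = 1` or
`s₁ + s₂ ∈ {2, 1, 0, -2, -4, -6, …}`. -/
def zeta2Sing (p : ℂ × ℂ) : Prop :=
  p.2 = 1 ∨ p.1 + p.2 = 2 ∨ p.1 + p.2 = 1 ∨ ∃ k : ℕ, p.1 + p.2 = -2 * (k : ℂ)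

/-
As a Dirichlet series in `s₂`, the double zeta function has the coefficients
`A(n) = ∑_{m < n} m ^ (-s₁) = ζ(s₁) - n ^ (1 - s₁) / (s₁ - 1) + O(1 / n)` when `Re s₁ = 1`. Hence it
continues to `Re s₂ > 0` as `ζ(s₁) ζ(s₂) - ζ(s₁ + s₂ - 1) / (s₁ - 1)` plus an absolutely convergent
series. On `s₂ = 1/2 + it` the Kusmin–Landau inequality and Euler–Maclaurin summation approximate
both zeta values by partial sums of any length `N ≍ t`, `N ≥ 4t`, so that the double zeta function
is `∑_{n < N} A(n) n ^ (-s₂) + O(t ^ (-1/4))`. The mean square of this Dirichlet polynomial over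
`[T, 2T]` is `T ∑_{n < 8T} |A(n)|² / n + O(T)` by Hilbert's inequality, the frequencies `log n`
being compared with the integers `n`. The diagonal sum is
`(|s₁ - 1|⁻² + |ζ(s₁)|²) log T + O(1)`, and summing over dyadic blocks gives the theorem.
-/

open scoped ComplexConjugate Topology

section HilbertForm

variable {ι : Type*}

lemma exp_mul_conj_exp (u v x : ℝ) :
    cexp (u * x * I) * conj (cexp (v * x * I)) = cexp (((u - v : ℝ) : ℂ) * I * x) := by
  rw [← exp_conj, ← Complex.exp_add]
  simp only [map_mul, conj_ofReal, conj_I, ofReal_sub]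
  ring_nf

lemma integral_mul_norm_sq_sum_exp (s : Finset ι) (c : ι → ℂ) (freq : ι → ℝ) {w : ℝ → ℂ}
    (hw : Continuous w) (a b : ℝ) :
    ∫ x in a..b, w x * (‖∑ i ∈ s, c i * cexp (freq i * x * I)‖ : ℂ) ^ 2 =
      ∑ i ∈ s, ∑ j ∈ s,
        c i * conj (c j) * ∫ x in a..b, w x * cexp (((freq i - freq j : ℝ) : ℂ) * I * x) := by
  have expand (x : ℝ) : w x * (‖∑ i ∈ s, c i * cexp (freq i * x * I)‖ : ℂ) ^ 2 =
      ∑ i ∈ s, ∑ j ∈ s,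
        c i * conj (c j) * (w x * cexp (((freq i - freq j : ℝ) : ℂ) * I * x)) := by
    rw [← mul_conj', map_sum, Finset.sum_mul_sum, Finset.mul_sum]
    refine Finset.sum_congr rfl fun i _ => ?_
    rw [Finset.mul_sum]
    refine Finset.sum_congr rfl fun j _ => ?_
    rw [← exp_mul_conj_exp, map_mul]
    ring
  simp_rw [expand]
  rw [intervalIntegral.integral_finsetSum fun i _ =>
    Continuous.intervalIntegrable (by fun_prop) a b]
  refine Finset.sum_congr rfl fun i _ => ?_
  rw [intervalIntegral.integral_finsetSum fun j _ =>
    Continuous.intervalIntegrable (by fun_prop) a b]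
  simp only [intervalIntegral.integral_const_mul]

/-- The Hilbert-type form `∑ cᵢ c̄ⱼ / (λᵢ - λⱼ)` attached to the frequencies `λ`. The diagonal needs
no separate treatment, because its terms have denominator `0` and hence vanish. -/
noncomputable def hilbertForm (s : Finset ι) (freq : ι → ℝ) (c : ι → ℂ) : ℂ :=
  ∑ i ∈ s, ∑ j ∈ s, c i * conj (c j) / ((freq i - freq j : ℝ) : ℂ)

lemma integral_norm_sq_sum_exp {s : Finset ι} {freq : ι → ℝ} (hfreq : Set.InjOn freq s)
    (c : ι → ℂ) (a b : ℝ) :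
    ((∫ x in a..b, ‖∑ i ∈ s, c i * cexp (freq i * x * I)‖ ^ 2 : ℝ) : ℂ) =
      (b - a) * ∑ i ∈ s, (‖c i‖ : ℂ) ^ 2 +
        (hilbertForm s freq (fun i => c i * cexp (freq i * b * I)) -
          hilbertForm s freq (fun i => c i * cexp (freq i * a * I))) / I := by
  classical
  have entry {i j : ι} (hi : i ∈ s) (hj : j ∈ s) :
      c i * conj (c j) * ∫ x in a..b, cexp (((freq i - freq j : ℝ) : ℂ) * I * x) =
        (if i = j then (b - a) * (‖c i‖ : ℂ) ^ 2 else 0) +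
          (c i * cexp (freq i * b * I) * conj (c j * cexp (freq j * b * I)) /
              ((freq i - freq j : ℝ) : ℂ) -
            c i * cexp (freq i * a * I) * conj (c j * cexp (freq j * a * I)) /
              ((freq i - freq j : ℝ) : ℂ)) / I := by
    rcases eq_or_ne i j with rfl | hij
    · simp [mul_conj', mul_comm]
    · have hne : ((freq i - freq j : ℝ) : ℂ) ≠ 0 :=
        ofReal_ne_zero.mpr (sub_ne_zero.mpr (hfreq.ne hi hj hij))
      rw [integral_exp_mul_complex (mul_ne_zero hne I_ne_zero), ← exp_mul_conj_exp,
        ← exp_mul_conj_exp, if_neg hij, map_mul, map_mul]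
      field_simp
      ring
  have key := integral_mul_norm_sq_sum_exp s c freq (w := fun _ => 1) continuous_const a b
  simp only [one_mul] at key
  rw [← intervalIntegral.integral_ofReal]
  simp only [ofReal_pow]
  rw [key, Finset.sum_congr rfl fun i hi => Finset.sum_congr rfl fun j hj => entry hi hj]
  simp only [hilbertForm, Finset.sum_add_distrib, Finset.sum_ite_eq, ← Finset.sum_div,
    Finset.sum_sub_distrib, Finset.mul_sum]
  congr 1
  exact Finset.sum_congr rfl fun i hi => if_pos hi

lemma integral_sub_pi_mul_exp {z : ℂ} (hz : cexp (z * (2 * π)) = 1) :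
    ∫ x in (0 : ℝ)..2 * π, ((x : ℂ) - π) * cexp (z * x) = 2 * π / z := by
  rcases eq_or_ne z 0 with rfl | hz0
  · have moment : ∫ x in (0 : ℝ)..2 * π, (x - π) = 0 := by
      rw [intervalIntegral.integral_sub (by simp) (by simp), integral_id,
        intervalIntegral.integral_const]
      simp only [smul_eq_mul]
      ring
    simp only [zero_mul, Complex.exp_zero, mul_one, div_zero, ← ofReal_sub]
    rw [intervalIntegral.integral_ofReal, moment, ofReal_zero]
  · have antideriv (x : ℝ) : HasDerivAt
        (fun y : ℝ => (((y : ℂ) - π) / z - 1 / z ^ 2) * cexp (z * y))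
        (((x : ℂ) - π) * cexp (z * x)) x := by
      have hid : HasDerivAt (fun y : ℝ => (y : ℂ)) 1 x := ofRealCLM.hasDerivAt
      refine ((((hid.sub_const (π : ℂ)).div_const z).sub_const (1 / z ^ 2)).mul
        (hid.const_mul z).cexp).congr_deriv ?_
      field_simp
      ring
    rw [intervalIntegral.integral_eq_sub_of_hasDerivAt (fun x _ => antideriv x)
      (Continuous.intervalIntegrable (by fun_prop) _ _)]
    push_cast
    rw [hz, mul_zero, Complex.exp_zero]
    field_simp
    ring

theorem norm_hilbertForm_intCast_le {s : Finset ι} {k : ι → ℤ} (hk : Set.InjOn k s) (c : ι → ℂ) :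
    ‖hilbertForm s (fun i => (k i : ℝ)) c‖ ≤ π * ∑ i ∈ s, ‖c i‖ ^ 2 := by
  set P : ℝ → ℂ := fun x => ∑ i ∈ s, c i * cexp (((k i : ℝ) : ℂ) * x * I) with hP
  have exp_period (n : ℤ) : cexp (((n : ℝ) : ℂ) * ((2 * π : ℝ) : ℂ) * I) = 1 := by
    rw [← Complex.exp_int_mul_two_pi_mul_I n]
    push_cast
    ring_nf
  have parseval : ∫ x in (0 : ℝ)..2 * π, ‖P x‖ ^ 2 = 2 * π * ∑ i ∈ s, ‖c i‖ ^ 2 := by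
    have key := integral_norm_sq_sum_exp (s := s) (freq := fun i => (k i : ℝ))
      (Int.cast_injective.comp_injOn hk) c 0 (2 * π)
    simp only [exp_period, ofReal_zero, mul_zero, zero_mul, Complex.exp_zero, sub_self, zero_div,
      add_zero, sub_zero] at key
    rw [hP]
    exact_mod_cast key
  have sawtooth : ∫ x in (0 : ℝ)..2 * π, ((x : ℂ) - π) * (‖P x‖ : ℂ) ^ 2 =
      2 * π / I * hilbertForm s (fun i => (k i : ℝ)) c := by
    rw [hP, integral_mul_norm_sq_sum_exp s c (fun i => (k i : ℝ)) (by fun_prop), hilbertForm,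
      Finset.mul_sum]
    refine Finset.sum_congr rfl fun i _ => ?_
    rw [Finset.mul_sum]
    refine Finset.sum_congr rfl fun j _ => ?_
    rw [integral_sub_pi_mul_exp]
    · simp only [div_eq_mul_inv, mul_inv]
      ring
    · rw [← exp_period (k i - k j)]
      push_cast
      ring_nf
  have bound : ‖∫ x in (0 : ℝ)..2 * π, ((x : ℂ) - π) * (‖P x‖ : ℂ) ^ 2‖ ≤
      ∫ x in (0 : ℝ)..2 * π, π * ‖P x‖ ^ 2 := by
    refine intervalIntegral.norm_integral_le_of_norm_le two_pi_pos.le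
      (.of_forall fun x hx => ?_) (Continuous.intervalIntegrable (by fun_prop) _ _)
    rw [norm_mul, norm_pow, norm_real, norm_norm, ← ofReal_sub, norm_real, Real.norm_eq_abs]
    have : |x - π| ≤ π := abs_le.mpr ⟨by linarith [hx.1], by linarith [hx.2]⟩
    gcongr
  rw [sawtooth, intervalIntegral.integral_const_mul, parseval, norm_mul, norm_div, norm_I] at bound
  have h2π : ‖(2 * π : ℂ)‖ = 2 * π := by
    rw [← ofReal_ofNat, ← ofReal_mul, norm_real, Real.norm_of_nonneg two_pi_pos.le]
  rw [h2π, div_one, mul_left_comm] at bound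
  exact le_of_mul_le_mul_left bound two_pi_pos

end HilbertForm

section DirichletPolynomials

lemma abs_inv_sub_inv_two_mul_sinh_half_le (u : ℝ) : |1 / u - 1 / (2 * Real.sinh (u / 2))| ≤ 1 := by
  wlog hu : 0 < u generalizing u
  · rcases (not_lt.mp hu).eq_or_lt with rfl | hu
    · simp
    · have := this (-u) (neg_pos.mpr hu)
      rwa [neg_div, Real.sinh_neg, mul_neg, div_neg, div_neg, neg_sub_neg, abs_sub_comm] at this
  obtain ⟨v, rfl⟩ : ∃ v, u = 2 * v := ⟨u / 2, by ring⟩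
  have hv : 0 < v := by linarith
  rw [mul_div_cancel_left₀ v two_ne_zero]
  have lower : v ≤ Real.sinh v := Real.self_le_sinh_iff.mpr hv.le
  have upper : Real.sinh v ≤ v * (2 * Real.sinh v + 1) := by
    have hexp : Real.exp v * (1 - 2 * v) ≤ Real.exp (-v) := by
      have := mul_le_mul_of_nonneg_left (Real.add_one_le_exp (-2 * v)) (Real.exp_pos v).le
      rw [← Real.exp_add] at this
      ring_nf at this ⊢
      exact this
    have hneg : Real.exp (-v) ≤ 1 := Real.exp_le_one_iff.mpr (by linarith)
    rw [Real.sinh_eq]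
    nlinarith
  have rewrite : 1 / (2 * v) - 1 / (2 * Real.sinh v) =
      (Real.sinh v - v) / (2 * v * Real.sinh v) := by
    field_simp
  rw [rewrite, abs_of_nonneg (div_nonneg (sub_nonneg.mpr lower) (by positivity)),
    div_le_one (by positivity)]
  linarith

lemma two_mul_sinh_half_log_sub_log {x y : ℝ} (hx : 0 < x) (hy : 0 < y) :
    2 * Real.sinh ((Real.log x - Real.log y) / 2) = (x - y) / (√x * √y) := by
  have hquot : Real.exp ((Real.log x - Real.log y) / 2) = √x / √y := by
    rw [sub_div, Real.exp_sub, Real.exp_half, Real.exp_half, Real.exp_log hx, Real.exp_log hy]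
  rw [Real.sinh_eq, Real.exp_neg, hquot]
  field_simp
  rw [Real.sq_sqrt hx.le, Real.sq_sqrt hy.le]

lemma abs_inv_log_sub_log_sub_inv_sub_le {x y : ℝ} (hx : 0 < x) (hy : 0 < y) :
    |1 / (√x * √y * (Real.log x - Real.log y)) - 1 / (x - y)| ≤ 1 / (√x * √y) := by
  have hpos : 0 < √x * √y := mul_pos (Real.sqrt_pos.mpr hx) (Real.sqrt_pos.mpr hy)
  have key := abs_inv_sub_inv_two_mul_sinh_half_le (Real.log x - Real.log y)
  rw [two_mul_sinh_half_log_sub_log hx hy, one_div_div] at key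
  have factor : 1 / (√x * √y * (Real.log x - Real.log y)) - 1 / (x - y) =
      1 / (√x * √y) * (1 / (Real.log x - Real.log y) - √x * √y / (x - y)) := by
    generalize Real.log x - Real.log y = u
    field_simp
  rw [factor, abs_mul, abs_of_pos (one_div_pos.mpr hpos)]
  exact mul_le_of_le_one_right (one_div_pos.mpr hpos).le key

lemma sum_Icc_one_div_sqrt_le (N : ℕ) : ∑ n ∈ Finset.Icc 1 N, 1 / √(n : ℝ) ≤ 2 * √N := by
  induction N with
  | zero => simp
  | succ n ih =>
    rw [Finset.sum_Icc_succ_top (Nat.le_add_left 1 n)]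
    have hroot : 0 < √((n + 1 : ℕ) : ℝ) := Real.sqrt_pos.mpr (by positivity)
    have step : 1 / √((n + 1 : ℕ) : ℝ) ≤ 2 * √((n + 1 : ℕ) : ℝ) - 2 * √(n : ℝ) := by
      rw [div_le_iff₀ hroot]
      nlinarith [sq_nonneg (√((n + 1 : ℕ) : ℝ) - √n), Real.sq_sqrt (Nat.cast_nonneg (α := ℝ) n),
        Real.sq_sqrt (Nat.cast_nonneg (α := ℝ) (n + 1)), Nat.cast_succ (R := ℝ) n]
    linarith

lemma norm_hilbertForm_log_sub_le (s : Finset ℕ) (hs : 0 ∉ s) (a : ℕ → ℂ) :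
    ‖hilbertForm s (fun n => -Real.log n) (fun n => a n / (√n : ℝ)) -
        hilbertForm s (fun n => ((-(n : ℤ) : ℤ) : ℝ)) a‖ ≤ (∑ n ∈ s, ‖a n‖ / √n) ^ 2 := by
  simp only [hilbertForm, ← Finset.sum_sub_distrib]
  rw [sq, Finset.sum_mul_sum]
  refine norm_sum_le_of_le _ fun m hm => norm_sum_le_of_le _ fun n hn => ?_
  have hm0 : (0 : ℝ) < m := Nat.cast_pos.mpr (Nat.pos_of_ne_zero fun h => hs (h ▸ hm))
  have hn0 : (0 : ℝ) < n := Nat.cast_pos.mpr (Nat.pos_of_ne_zero fun h => hs (h ▸ hn))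
  have factor : a m / (√m : ℝ) * conj (a n / (√n : ℝ)) / ((-Real.log m - -Real.log n : ℝ) : ℂ) -
        a m * conj (a n) / ((((-(m : ℤ) : ℤ) : ℝ) - ((-(n : ℤ) : ℤ) : ℝ) : ℝ) : ℂ) =
      -(a m * conj (a n) *
        ((1 / (√m * √n * (Real.log m - Real.log n)) - 1 / ((m : ℝ) - n) : ℝ) : ℂ)) := by
    have hlog : -Real.log m - -Real.log n = -(Real.log m - Real.log n) := by ring
    have hint : ((-(m : ℤ) : ℤ) : ℝ) - ((-(n : ℤ) : ℤ) : ℝ) = -((m : ℝ) - n) := by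
      push_cast
      ring
    rw [hlog, hint, map_div₀, conj_ofReal, ofReal_sub, ofReal_div, ofReal_div, ofReal_mul,
      ofReal_mul, ofReal_neg, ofReal_neg, ofReal_one]
    simp only [div_eq_mul_inv, mul_inv, one_mul, inv_neg]
    ring
  rw [factor, norm_neg, norm_mul, norm_mul, RCLike.norm_conj, norm_real, Real.norm_eq_abs,
    div_mul_div_comm, div_eq_mul_one_div (‖a m‖ * ‖a n‖)]
  gcongr
  exact abs_inv_log_sub_log_sub_inv_sub_le hm0 hn0

lemma norm_hilbertForm_log_le {a : ℕ → ℂ} {C : ℝ} (ha : ∀ n, ‖a n‖ ≤ C) (N : ℕ) :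
    ‖hilbertForm (Finset.Ico 1 N) (fun n => -Real.log n) (fun n => a n / (√n : ℝ))‖ ≤
      8 * C ^ 2 * N := by
  have hC : 0 ≤ C := (norm_nonneg _).trans (ha 0)
  have sum_norm_sq_le : ∑ n ∈ Finset.Ico 1 N, ‖a n‖ ^ 2 ≤ N * C ^ 2 :=
    calc ∑ n ∈ Finset.Ico 1 N, ‖a n‖ ^ 2
      _ ≤ (Finset.Ico 1 N).card • C ^ 2 :=
        Finset.sum_le_card_nsmul _ _ _ fun n _ => pow_le_pow_left₀ (norm_nonneg _) (ha n) 2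
      _ ≤ N * C ^ 2 := by
        rw [Nat.card_Ico, nsmul_eq_mul]
        gcongr
        exact Nat.sub_le N 1
  have sum_norm_div_sqrt_le : ∑ n ∈ Finset.Ico 1 N, ‖a n‖ / √n ≤ C * (2 * √N) :=
    calc ∑ n ∈ Finset.Ico 1 N, ‖a n‖ / √n
      _ ≤ ∑ n ∈ Finset.Ico 1 N, C * (1 / √n) := by
        gcongr with n
        rw [mul_one_div]
        gcongr
        exact ha n
      _ ≤ ∑ n ∈ Finset.Icc 1 N, C * (1 / √n) :=
        Finset.sum_le_sum_of_subset_of_nonneg Finset.Ico_subset_Icc_self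
          fun n _ _ => by positivity
      _ ≤ C * (2 * √N) := by
        rw [← Finset.mul_sum]
        gcongr
        exact sum_Icc_one_div_sqrt_le N
  have integer_form := norm_hilbertForm_intCast_le (s := Finset.Ico 1 N) (k := fun n => -(n : ℤ))
    (neg_injective.comp Nat.cast_injective).injOn a
  have difference := norm_hilbertForm_log_sub_le (Finset.Ico 1 N) (by simp) a
  calc _ ≤ (∑ n ∈ Finset.Ico 1 N, ‖a n‖ / √n) ^ 2 + π * ∑ n ∈ Finset.Ico 1 N, ‖a n‖ ^ 2 :=
        (norm_le_norm_sub_add _ _).trans (add_le_add difference integer_form)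
    _ ≤ (C * (2 * √N)) ^ 2 + 4 * (N * C ^ 2) := by
        gcongr
        exact pi_le_four
    _ = 8 * C ^ 2 * N := by
        rw [mul_pow, mul_pow, Real.sq_sqrt (Nat.cast_nonneg N)]
        ring

lemma natCast_cpow_neg_half_add_mul_I {n : ℕ} (hn : n ≠ 0) (t : ℝ) :
    (n : ℂ) ^ (-((1 / 2 : ℂ) + t * I)) =
      1 / (√n : ℝ) * cexp (((-Real.log n : ℝ) : ℂ) * t * I) := by
  have hn0 : (n : ℂ) ≠ 0 := Nat.cast_ne_zero.mpr hn
  have hsqrt : (n : ℂ) ^ (-(1 / 2) : ℂ) = 1 / (√n : ℝ) := by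
    rw [Complex.cpow_neg, Real.sqrt_eq_rpow, ofReal_cpow (Nat.cast_nonneg n)]
    simp only [one_div, ofReal_inv, ofReal_ofNat, ofReal_natCast]
  rw [neg_add, Complex.cpow_add _ _ hn0, hsqrt, Complex.cpow_def_of_ne_zero hn0, ← natCast_log]
  push_cast
  ring_nf

theorem abs_integral_dirichletPolynomial_sub_le {a : ℕ → ℂ} {C : ℝ} (ha : ∀ n, ‖a n‖ ≤ C)
    (N : ℕ) (t₁ t₂ : ℝ) :
    |(∫ t in t₁..t₂, ‖∑ n ∈ Finset.Ico 1 N, a n * (n : ℂ) ^ (-((1 / 2 : ℂ) + t * I))‖ ^ 2) -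
        (t₂ - t₁) * ∑ n ∈ Finset.Ico 1 N, ‖a n‖ ^ 2 / n| ≤ 16 * C ^ 2 * N := by
  have hfreq : Set.InjOn (fun n : ℕ => -Real.log n) (Finset.Ico 1 N) := by
    intro m hm n hn hmn
    have hm0 : (0 : ℝ) < m := by exact_mod_cast (Finset.mem_Ico.mp hm).1
    have hn0 : (0 : ℝ) < n := by exact_mod_cast (Finset.mem_Ico.mp hn).1
    exact_mod_cast Real.log_injOn_pos hm0 hn0 (neg_injective hmn)
  have as_exp (t : ℝ) : ∑ n ∈ Finset.Ico 1 N, a n * (n : ℂ) ^ (-((1 / 2 : ℂ) + t * I)) =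
      ∑ n ∈ Finset.Ico 1 N, a n / (√n : ℝ) * cexp (((-Real.log n : ℝ) : ℂ) * t * I) :=
    Finset.sum_congr rfl fun n hn => by
      rw [natCast_cpow_neg_half_add_mul_I (Nat.one_le_iff_ne_zero.mp (Finset.mem_Ico.mp hn).1)]
      ring
  have diagonal : ∑ n ∈ Finset.Ico 1 N, ‖a n‖ ^ 2 / n =
      ∑ n ∈ Finset.Ico 1 N, ‖a n / (√n : ℝ)‖ ^ 2 :=
    Finset.sum_congr rfl fun n _ => by
      rw [norm_div, norm_real, Real.norm_of_nonneg (Real.sqrt_nonneg _), div_pow,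
        Real.sq_sqrt (Nat.cast_nonneg n)]
  have rotated (t : ℝ) : ‖hilbertForm (Finset.Ico 1 N) (fun n => -Real.log n) (fun n =>
      a n / (√n : ℝ) * cexp (((-Real.log n : ℝ) : ℂ) * t * I))‖ ≤ 8 * C ^ 2 * N := by
    have hnorm (n : ℕ) : ‖a n * cexp (((-Real.log n : ℝ) : ℂ) * t * I)‖ ≤ C := by
      rw [norm_mul, ← ofReal_mul, norm_exp_ofReal_mul_I, mul_one]
      exact ha n
    simpa only [mul_div_right_comm] using norm_hilbertForm_log_le hnorm N
  have mean_value := integral_norm_sq_sum_exp hfreq (fun n => a n / (√n : ℝ)) t₁ t₂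
  rw [← sub_eq_iff_eq_add'] at mean_value
  simp_rw [as_exp, diagonal]
  rw [← Real.norm_eq_abs, ← norm_real]
  simp only [ofReal_sub, ofReal_mul, ofReal_sum, ofReal_pow]
  rw [mean_value, norm_div, norm_I, div_one]
  refine (norm_sub_le _ _).trans ?_
  linarith [rotated t₁, rotated t₂]

end DirichletPolynomials

section MeanSquare

theorem isBigO_id_of_isBigO_sub_comp_two_mul {E : Type*} [NormedAddCommGroup E] {G : ℝ → E}
    {t₀ : ℝ} (hG : ContinuousOn G (Set.Ici t₀))
    (hdouble : (fun T => G (2 * T) - G T) =O[atTop] (id : ℝ → ℝ)) :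
    G =O[atTop] (id : ℝ → ℝ) := by
  obtain ⟨K, hK, hdouble⟩ := hdouble.exists_nonneg
  obtain ⟨T₁, hT₁⟩ := eventually_atTop.mp
    ((eventually_ge_atTop t₀).and ((eventually_ge_atTop 1).and hdouble.bound))
  obtain ⟨hT₁0, hT₁1, -⟩ := hT₁ T₁ le_rfl
  have hstep (T : ℝ) (hT : T₁ ≤ T) : ‖G (2 * T) - G T‖ ≤ K * ‖id T‖ := (hT₁ T hT).2.2
  obtain ⟨B, hB⟩ := isCompact_Icc.exists_bound_of_continuousOn
    (hG.mono fun t (ht : t ∈ Set.Icc T₁ (2 * T₁)) => hT₁0.trans ht.1)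
  have growth (k : ℕ) : ∀ T, T₁ ≤ T → T ≤ 2 ^ k * (2 * T₁) → ‖G T‖ ≤ B + K * T := by
    induction k with
    | zero =>
      intro T hT hT'
      have : 0 ≤ K * T := mul_nonneg hK (by linarith)
      linarith [hB T ⟨hT, by linarith⟩]
    | succ k ih =>
      intro T hT hT'
      rcases le_total T (2 * T₁) with hle | hge
      · have : 0 ≤ K * T := mul_nonneg hK (by linarith)
        linarith [hB T ⟨hT, hle⟩]
      · have half := ih (T / 2) (by linarith) (by rw [pow_succ] at hT'; linarith)
        have step := hstep (T / 2) (by linarith)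
        rw [mul_div_cancel₀ T two_ne_zero, id, Real.norm_of_nonneg (by linarith)] at step
        linarith [norm_le_norm_sub_add (G T) (G (T / 2))]
  refine IsBigO.of_bound (B + K) ((eventually_ge_atTop T₁).mono fun T hT => ?_)
  obtain ⟨k, hk⟩ := pow_unbounded_of_one_lt T one_lt_two
  have hB0 : 0 ≤ B := (norm_nonneg _).trans (hB T₁ ⟨le_rfl, by linarith⟩)
  have hbound := growth k T hT (by nlinarith [pow_pos (two_pos (α := ℝ)) k])
  rw [id, Real.norm_of_nonneg (by linarith : (0 : ℝ) ≤ T)]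
  nlinarith

lemma abs_norm_sq_sub_norm_sq_le {E : Type*} [SeminormedAddCommGroup E] (x y : E) :
    |‖x‖ ^ 2 - ‖y‖ ^ 2| ≤ ‖x - y‖ * (‖x‖ + ‖y‖) := by
  rw [sq_sub_sq, mul_comm, abs_mul, abs_of_nonneg (by positivity : 0 ≤ ‖x‖ + ‖y‖)]
  gcongr
  exact abs_norm_sub_norm_le x y

lemma abs_norm_sq_sub_norm_sq_le_of_norm_sub_le {E : Type*} [SeminormedAddCommGroup E] {x y : E}
    {K ε : ℝ} (hε₀ : 0 ≤ ε) (hε₁ : ε ≤ 1) (h : ‖x - y‖ ≤ K * ε) :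
    |‖x‖ ^ 2 - ‖y‖ ^ 2| ≤ ε * ‖y‖ ^ 2 + 2 * K ^ 2 := by
  have hx : ‖x‖ ≤ ‖x - y‖ + ‖y‖ := norm_le_norm_sub_add x y
  calc |‖x‖ ^ 2 - ‖y‖ ^ 2|
    _ ≤ ‖x - y‖ * (‖x‖ + ‖y‖) := abs_norm_sq_sub_norm_sq_le x y
    _ ≤ K * ε * (2 * ‖y‖ + K * ε) :=
      mul_le_mul h (by linarith) (by positivity) ((norm_nonneg _).trans h)
    _ ≤ ε * ‖y‖ ^ 2 + 2 * K ^ 2 := by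
      nlinarith [mul_nonneg hε₀ (sq_nonneg (K - ‖y‖)),
        mul_nonneg (sq_nonneg K) (sub_nonneg.mpr hε₁),
        mul_nonneg (mul_nonneg (sq_nonneg K) (sub_nonneg.mpr hε₁)) hε₀]

/-- The Dirichlet polynomial `∑ aₙ n⁻ˢ` of length `⌈8T⌉` on the line `s = 1/2 + it`, the length
which suits the dyadic block `[T, 2T]`. -/
noncomputable def blockPolynomial (a : ℕ → ℂ) (T t : ℝ) : ℂ :=
  ∑ n ∈ Finset.Ico 1 ⌈8 * T⌉₊, a n * (n : ℂ) ^ (-((1 / 2 : ℂ) + t * I))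

variable {a : ℕ → ℂ} {C c : ℝ}

lemma continuous_blockPolynomial (a : ℕ → ℂ) (T : ℝ) : Continuous (blockPolynomial a T) := by
  refine continuous_finsetSum _ fun n hn =>
    continuous_const.mul (Continuous.const_cpow (by fun_prop) ?_)
  exact .inl (Nat.cast_ne_zero.mpr (Nat.one_le_iff_ne_zero.mp (Finset.mem_Ico.mp hn).1))

lemma isBigO_integral_blockPolynomial_sub (ha : ∀ n, ‖a n‖ ≤ C)
    (hdiag : (fun N : ℕ => ∑ n ∈ Finset.Ico 1 N, ‖a n‖ ^ 2 / n - c * Real.log N)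
      =O[atTop] fun _ => (1 : ℝ)) :
    (fun T : ℝ => (∫ t in T..2 * T, ‖blockPolynomial a T t‖ ^ 2) - c * T * Real.log T)
      =O[atTop] fun T => T := by
  have length_ratio : Tendsto (fun T : ℝ => (⌈8 * T⌉₊ : ℝ) / T) atTop (𝓝 8) :=
    tendsto_nat_ceil_mul_div_atTop (by norm_num)
  have hceil : Tendsto (fun T : ℝ => ⌈8 * T⌉₊) atTop atTop :=
    tendsto_nat_ceil_atTop.comp (tendsto_id.const_mul_atTop (by norm_num))
  have mean_value : (fun T : ℝ => (∫ t in T..2 * T, ‖blockPolynomial a T t‖ ^ 2) -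
      T * ∑ n ∈ Finset.Ico 1 ⌈8 * T⌉₊, ‖a n‖ ^ 2 / n) =O[atTop] fun T => T := by
    refine (IsBigO.of_bound (16 * C ^ 2) (.of_forall fun T => ?_)).trans
      (isBigO_of_div_tendsto_nhds (g := fun T => T) ?_ 8 length_ratio)
    · have key := abs_integral_dirichletPolynomial_sub_le ha ⌈8 * T⌉₊ T (2 * T)
      rw [two_mul T, add_sub_cancel_right, ← two_mul] at key
      rwa [Real.norm_natCast]
    · exact (eventually_gt_atTop 0).mono fun T hT h0 => absurd h0 hT.ne'
  have diagonal : (fun T : ℝ => T * (∑ n ∈ Finset.Ico 1 ⌈8 * T⌉₊, ‖a n‖ ^ 2 / n -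
      c * Real.log ⌈8 * T⌉₊)) =O[atTop] fun T => T := by
    simpa using (isBigO_refl (fun T : ℝ => T) atTop).mul (hdiag.comp_tendsto hceil)
  have log_length : (fun T : ℝ => c * (T * (Real.log ⌈8 * T⌉₊ - Real.log T))) =O[atTop]
      fun T => T := by
    have bounded : (fun T : ℝ => Real.log ⌈8 * T⌉₊ - Real.log T) =O[atTop] fun _ => (1 : ℝ) := by
      refine ((length_ratio.log (by norm_num)).isBigO_one ℝ).congr' ?_ .rfl
      filter_upwards [eventually_gt_atTop 0] with T hT
      exact Real.log_div (Nat.cast_ne_zero.mpr (Nat.ceil_pos.mpr (by positivity)).ne') hT.ne'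
    simpa using ((isBigO_refl (fun T : ℝ => T) atTop).mul bounded).const_mul_left c
  refine ((mean_value.add diagonal).add log_length).congr_left fun T => ?_
  ring

lemma isBigO_rpow_mul_integral_blockPolynomial (ha : ∀ n, ‖a n‖ ≤ C)
    (hdiag : (fun N : ℕ => ∑ n ∈ Finset.Ico 1 N, ‖a n‖ ^ 2 / n - c * Real.log N)
      =O[atTop] fun _ => (1 : ℝ)) :
    (fun T : ℝ => T ^ (-(1 / 4) : ℝ) * ∫ t in T..2 * T, ‖blockPolynomial a T t‖ ^ 2)
      =O[atTop] fun T => T := by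
  have log_le : Real.log =O[atTop] fun T : ℝ => T ^ (1 / 4 : ℝ) :=
    (isLittleO_log_rpow_atTop (by norm_num)).isBigO
  have one_le : (fun _ : ℝ => (1 : ℝ)) =O[atTop] fun T : ℝ => T ^ (1 / 4 : ℝ) :=
    IsBigO.of_bound 1 <| (eventually_ge_atTop 1).mono fun T hT => by
      have : 1 ≤ T ^ (1 / 4 : ℝ) := Real.one_le_rpow hT (by norm_num)
      rw [norm_one, one_mul, Real.norm_of_nonneg (by linarith)]
      exact this
  have main_term : (fun T : ℝ => c * T * Real.log T) =O[atTop]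
      fun T => T * T ^ (1 / 4 : ℝ) := by
    simpa only [mul_assoc] using ((isBigO_refl (fun T : ℝ => T) atTop).mul log_le).const_mul_left c
  have error_term := (isBigO_integral_blockPolynomial_sub ha hdiag).trans
    (by simpa only [mul_one] using (isBigO_refl (fun T : ℝ => T) atTop).mul one_le)
  refine ((isBigO_refl (fun T : ℝ => T ^ (-(1 / 4) : ℝ)) atTop).mul
    ((error_term.add main_term).congr_left fun T => sub_add_cancel _ _)).congr' .rfl ?_
  filter_upwards [eventually_gt_atTop 0] with T hT
  rw [mul_left_comm, ← Real.rpow_add hT, neg_add_cancel, Real.rpow_zero, mul_one]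

lemma isBigO_integral_sub_integral_blockPolynomial {F : ℝ → ℂ} {t₀ K : ℝ}
    (hF : ContinuousOn F (Set.Ici t₀)) (ha : ∀ n, ‖a n‖ ≤ C)
    (hdiag : (fun N : ℕ => ∑ n ∈ Finset.Ico 1 N, ‖a n‖ ^ 2 / n - c * Real.log N)
      =O[atTop] fun _ => (1 : ℝ))
    (happrox : ∀ᶠ t : ℝ in atTop, ∀ N : ℕ, 4 * t ≤ N → N ≤ 9 * t →
      ‖F t - ∑ n ∈ Finset.Ico 1 N, a n * (n : ℂ) ^ (-((1 / 2 : ℂ) + t * I))‖ ≤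
        K * t ^ (-(1 / 4) : ℝ)) :
    (fun T : ℝ => (∫ t in T..2 * T, ‖F t‖ ^ 2) - ∫ t in T..2 * T, ‖blockPolynomial a T t‖ ^ 2)
      =O[atTop] fun T => T := by
  have majorant : (fun T : ℝ =>
      (T ^ (-(1 / 4) : ℝ) * ∫ t in T..2 * T, ‖blockPolynomial a T t‖ ^ 2) + 2 * K ^ 2 * T)
        =O[atTop] fun T => T :=
    (isBigO_rpow_mul_integral_blockPolynomial ha hdiag).add
      ((isBigO_refl _ _).const_mul_left _)
  obtain ⟨T₁, hT₁⟩ := eventually_atTop.mp happrox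
  refine IsBigO.trans (IsBigO.of_bound 1 ?_) majorant
  filter_upwards [eventually_ge_atTop T₁, eventually_ge_atTop t₀, eventually_ge_atTop 1]
    with T hT hT0 hT1
  have hTT : T ≤ 2 * T := by linarith
  have pointwise (t : ℝ) (ht : t ∈ Set.Ioc T (2 * T)) :
      ‖‖F t‖ ^ 2 - ‖blockPolynomial a T t‖ ^ 2‖ ≤
        T ^ (-(1 / 4) : ℝ) * ‖blockPolynomial a T t‖ ^ 2 + 2 * K ^ 2 := by
    have approx : ‖F t - blockPolynomial a T t‖ ≤ K * t ^ (-(1 / 4) : ℝ) := by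
      refine hT₁ t (hT.trans ht.1.le) _ ?_ ?_
      · linarith [Nat.le_ceil (8 * T), ht.2]
      · linarith [Nat.ceil_lt_add_one (by positivity : 0 ≤ 8 * T), ht.1]
    have hK : 0 ≤ K := nonneg_of_mul_nonneg_left ((norm_nonneg _).trans approx)
      (Real.rpow_pos_of_pos (by linarith [ht.1]) _)
    refine abs_norm_sq_sub_norm_sq_le_of_norm_sub_le (by positivity)
      (Real.rpow_le_one_of_one_le_of_nonpos hT1 (by norm_num)) (approx.trans ?_)
    exact mul_le_mul_of_nonneg_left
      (Real.rpow_le_rpow_of_nonpos (by positivity) ht.1.le (by norm_num)) hK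
  have hFint : IntervalIntegrable (fun t => ‖F t‖ ^ 2) MeasureTheory.volume T (2 * T) :=
    ContinuousOn.intervalIntegrable_of_Icc hTT
      ((hF.mono fun t ht => hT0.trans ht.1).norm.pow 2)
  have hcont : Continuous fun t => ‖blockPolynomial a T t‖ ^ 2 :=
    (continuous_blockPolynomial a T).norm.pow 2
  rw [← intervalIntegral.integral_sub hFint (hcont.intervalIntegrable _ _)]
  refine (intervalIntegral.norm_integral_le_of_norm_le hTT (.of_forall pointwise)
    (Continuous.intervalIntegrable (by fun_prop) _ _)).trans ?_
  rw [intervalIntegral.integral_add (Continuous.intervalIntegrable (by fun_prop) _ _) (by simp),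
    intervalIntegral.integral_const_mul, intervalIntegral.integral_const, smul_eq_mul, one_mul,
    two_mul T, add_sub_cancel_right, mul_comm T (2 * K ^ 2)]
  exact le_abs_self _

lemma continuousOn_integral_of_continuousOn_Ici {E : Type*} [NormedAddCommGroup E]
    [NormedSpace ℝ E] {f : ℝ → E} {t₀ : ℝ} (hf : ContinuousOn f (Set.Ici t₀)) :
    ContinuousOn (fun T => ∫ t in t₀..T, f t) (Set.Ici t₀) := by
  have extension : Continuous fun t => f (max t₀ t) :=
    hf.comp_continuous (by fun_prop) fun t => le_max_left t₀ t
  refine (intervalIntegral.continuous_primitive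
    (fun a b => extension.intervalIntegrable (μ := MeasureTheory.volume) a b)
    t₀).continuousOn.congr fun T hT => ?_
  refine intervalIntegral.integral_congr fun t ht => ?_
  rw [Set.uIcc_of_le hT] at ht
  exact congrArg f (max_eq_right ht.1).symm

theorem isBigO_integral_norm_sq_sub_of_approx {F : ℝ → ℂ} {t₀ K : ℝ}
    (hF : ContinuousOn F (Set.Ici t₀)) (ha : ∀ n, ‖a n‖ ≤ C)
    (hdiag : (fun N : ℕ => ∑ n ∈ Finset.Ico 1 N, ‖a n‖ ^ 2 / n - c * Real.log N)
      =O[atTop] fun _ => (1 : ℝ))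
    (happrox : ∀ᶠ t : ℝ in atTop, ∀ N : ℕ, 4 * t ≤ N → N ≤ 9 * t →
      ‖F t - ∑ n ∈ Finset.Ico 1 N, a n * (n : ℂ) ^ (-((1 / 2 : ℂ) + t * I))‖ ≤
        K * t ^ (-(1 / 4) : ℝ)) :
    (fun T : ℝ => (∫ t in t₀..T, ‖F t‖ ^ 2) - c * T * Real.log T) =O[atTop] fun T => T := by
  have block : (fun T : ℝ => (∫ t in T..2 * T, ‖F t‖ ^ 2) - c * T * Real.log T)
      =O[atTop] fun T => T :=
    ((isBigO_integral_sub_integral_blockPolynomial hF ha hdiag happrox).add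
      (isBigO_integral_blockPolynomial_sub ha hdiag)).congr_left fun T => sub_add_sub_cancel _ _ _
  refine isBigO_id_of_isBigO_sub_comp_two_mul (t₀ := t₀) ?_ ?_
  · refine (continuousOn_integral_of_continuousOn_Ici (hF.norm.pow 2)).sub ?_
    simpa only [mul_assoc] using (Real.continuous_mul_log.const_mul c).continuousOn
  · refine (block.sub ((isBigO_refl (fun T : ℝ => T) atTop).const_mul_left
      (2 * c * Real.log 2))).congr' ?_ .rfl
    filter_upwards [eventually_ge_atTop t₀, eventually_gt_atTop 0] with T hT hT0
    have integrable {b : ℝ} (hb : t₀ ≤ b) :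
        IntervalIntegrable (fun t => ‖F t‖ ^ 2) MeasureTheory.volume t₀ b :=
      ContinuousOn.intervalIntegrable_of_Icc hb ((hF.mono Set.Icc_subset_Ici_self).norm.pow 2)
    rw [← intervalIntegral.integral_interval_sub_left (integrable (by linarith : t₀ ≤ 2 * T))
      (integrable hT), Real.log_mul two_ne_zero hT0.ne']
    ring

end MeanSquare

section KusminLandau

lemma sum_Ico_eq_of_eq_mul_sub {R : Type*} [Ring R] {x g : ℕ → R}
    {N M : ℕ} (h : ∀ n, N ≤ n → x n = g n * (x (n + 1) - x n)) (hNM : N ≤ M) :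
    ∑ n ∈ Finset.Ico N M, x n =
      g M * x M - g N * x N + ∑ n ∈ Finset.Ico N M, (g n - g (n + 1)) * x (n + 1) := by
  induction M, hNM using Nat.le_induction with
  | base => simp
  | succ M hM ih =>
    rw [Finset.sum_Ico_succ_top hM, Finset.sum_Ico_succ_top hM, ih]
    rw [sub_mul, ← sub_add_cancel (x (M + 1)) (x M), mul_add (g M), ← h M hM, sub_add_cancel]
    abel

lemma half_norm_le_norm_exp_sub_one {w : ℂ} (hw : ‖w‖ ≤ 1 / 2) : ‖w‖ / 2 ≤ ‖cexp w - 1‖ := by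
  have := norm_exp_sub_one_sub_id_le (hw.trans (by norm_num))
  have := norm_sub_norm_le w (w - (cexp w - 1))
  rw [sub_sub_cancel, norm_sub_rev w] at this
  nlinarith [norm_nonneg w]

/-- The increment of `log` at `n`, so that `(n + 1)⁻ˢ = n⁻ˢ exp (-s · logStep n)`. -/
noncomputable def logStep (n : ℕ) : ℝ := Real.log (n + 1) - Real.log n

lemma logStep_eq_log {n : ℕ} (hn : 0 < n) : logStep n = Real.log ((n + 1) / n) :=
  (Real.log_div (by positivity) (by positivity)).symm

lemma logStep_le {n : ℕ} (hn : 0 < n) : logStep n ≤ 1 / n := by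
  calc logStep n = Real.log ((n + 1) / n) := logStep_eq_log hn
    _ ≤ (n + 1) / n - 1 := Real.log_le_sub_one_of_pos (by positivity)
    _ = 1 / n := by field_simp; ring

lemma one_div_two_mul_le_logStep {n : ℕ} (hn : 0 < n) : 1 / (2 * n) ≤ logStep n := by
  have hn' : (1 : ℝ) ≤ n := Nat.one_le_cast.mpr hn
  calc (1 / (2 * n) : ℝ) ≤ 1 / (n + 1) := by gcongr; linarith
    _ = 1 - (((n : ℝ) + 1) / n)⁻¹ := by field_simp; ring
    _ ≤ Real.log ((n + 1) / n) := Real.one_sub_inv_le_log_of_pos (by positivity)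
    _ = logStep n := (logStep_eq_log hn).symm

lemma logStep_nonneg {n : ℕ} (hn : 0 < n) : 0 ≤ logStep n :=
  (by positivity : (0 : ℝ) ≤ 1 / (2 * n)).trans (one_div_two_mul_le_logStep hn)

lemma logStep_succ_le {n : ℕ} (hn : 0 < n) : logStep (n + 1) ≤ logStep n := by
  rw [logStep_eq_log hn, logStep_eq_log n.succ_pos]
  have hn' : (0 : ℝ) < n := Nat.cast_pos.mpr hn
  refine Real.log_le_log (by positivity) ?_
  push_cast
  rw [div_le_div_iff₀ (by positivity) hn']
  linarith

lemma logStep_sub_logStep_succ_le {n : ℕ} (hn : 0 < n) :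
    logStep n - logStep (n + 1) ≤ 1 / n ^ 2 := by
  rw [logStep_eq_log hn, logStep_eq_log n.succ_pos, ← Real.log_div (by positivity) (by positivity)]
  refine (Real.log_le_sub_one_of_pos (by positivity)).trans ?_
  push_cast
  rw [div_div_eq_mul_div, div_sub_one (by positivity), div_le_div_iff₀ (by positivity)
    (by positivity)]
  field_simp
  nlinarith

lemma natCast_succ_cpow_neg {n : ℕ} (hn : 0 < n) (s : ℂ) :
    ((n + 1 : ℕ) : ℂ) ^ (-s) = cexp (-s * logStep n) * (n : ℂ) ^ (-s) := by
  have hn0 : (n : ℂ) ≠ 0 := Nat.cast_ne_zero.mpr hn.ne'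
  rw [Complex.cpow_def_of_ne_zero hn0, Complex.cpow_def_of_ne_zero (Nat.cast_ne_zero.mpr
    n.succ_ne_zero), ← Complex.exp_add, ← natCast_log, ← natCast_log, logStep]
  push_cast
  ring_nf

/-- The reciprocal increment `(exp (-s · logStep n) - 1)⁻¹`, which turns `n⁻ˢ` into a multiple of
the difference `(n + 1)⁻ˢ - n⁻ˢ`. -/
noncomputable def kusminWeight (s : ℂ) (n : ℕ) : ℂ := (cexp (-s * logStep n) - 1)⁻¹

section Weight

variable {s : ℂ} {n : ℕ}

lemma norm_neg_mul_logStep_le (hn : 0 < n) (hsn : 2 * ‖s‖ ≤ n) : ‖-s * logStep n‖ ≤ 1 / 2 := by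
  rw [norm_mul, norm_neg, norm_real, Real.norm_of_nonneg (logStep_nonneg hn)]
  calc ‖s‖ * logStep n ≤ n / 2 * (1 / n) := by
        gcongr
        · exact logStep_nonneg hn
        · linarith
        · exact logStep_le hn
    _ = 1 / 2 := by field_simp

lemma norm_div_four_mul_le_norm_exp_sub_one (hn : 0 < n) (hsn : 2 * ‖s‖ ≤ n) :
    ‖s‖ / (4 * n) ≤ ‖cexp (-s * logStep n) - 1‖ := by
  refine le_trans ?_ (half_norm_le_norm_exp_sub_one (norm_neg_mul_logStep_le hn hsn))
  rw [norm_mul, norm_neg, norm_real, Real.norm_of_nonneg (logStep_nonneg hn)]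
  calc ‖s‖ / (4 * n) = ‖s‖ * (1 / (2 * n)) / 2 := by ring
    _ ≤ ‖s‖ * logStep n / 2 := by
        gcongr
        exact one_div_two_mul_le_logStep hn

lemma exp_neg_mul_logStep_sub_one_ne_zero (hn : 0 < n) (hs : s ≠ 0) (hsn : 2 * ‖s‖ ≤ n) :
    cexp (-s * logStep n) - 1 ≠ 0 :=
  norm_pos_iff.mp <| (by positivity : 0 < ‖s‖ / (4 * n)).trans_le
    (norm_div_four_mul_le_norm_exp_sub_one hn hsn)

lemma norm_kusminWeight_le (hn : 0 < n) (hs : s ≠ 0) (hsn : 2 * ‖s‖ ≤ n) :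
    ‖kusminWeight s n‖ ≤ 4 * n / ‖s‖ := by
  rw [kusminWeight, norm_inv, ← inv_div]
  exact inv_anti₀ (by positivity) (norm_div_four_mul_le_norm_exp_sub_one hn hsn)

lemma natCast_cpow_neg_eq_kusminWeight_mul (hn : 0 < n) (hs : s ≠ 0) (hsn : 2 * ‖s‖ ≤ n) :
    (n : ℂ) ^ (-s) = kusminWeight s n * (((n + 1 : ℕ) : ℂ) ^ (-s) - (n : ℂ) ^ (-s)) := by
  rw [natCast_succ_cpow_neg hn, kusminWeight, ← sub_one_mul,
    inv_mul_cancel_left₀ (exp_neg_mul_logStep_sub_one_ne_zero hn hs hsn)]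

lemma norm_exp_logStep_succ_sub_le (hn : 0 < n) (hsn : 2 * ‖s‖ ≤ n) :
    ‖cexp (-s * logStep (n + 1)) - cexp (-s * logStep n)‖ ≤ 4 * ‖s‖ / n ^ 2 := by
  have hn1 : (1 : ℝ) ≤ n := Nat.one_le_cast.mpr hn
  set δ : ℂ := s * ((logStep n - logStep (n + 1) : ℝ) : ℂ) with hδ
  have hδ_le : ‖δ‖ ≤ ‖s‖ / n ^ 2 := by
    rw [hδ, norm_mul, norm_real, Real.norm_of_nonneg (sub_nonneg.mpr (logStep_succ_le hn)),
      ← mul_one_div]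
    gcongr
    exact logStep_sub_logStep_succ_le hn
  have hδ_one : ‖δ‖ ≤ 1 := hδ_le.trans ((div_le_one (by positivity)).mpr (by nlinarith))
  have hexp : ‖cexp (-s * logStep n)‖ ≤ 2 := by
    have hw := norm_neg_mul_logStep_le hn hsn
    have := norm_exp_sub_one_le (hw.trans (by norm_num))
    have := norm_le_norm_sub_add (cexp (-s * logStep n)) 1
    rw [norm_one] at this
    linarith
  have factor : cexp (-s * logStep (n + 1)) - cexp (-s * logStep n) =
      cexp (-s * logStep n) * (cexp δ - 1) := by
    rw [mul_sub_one, ← Complex.exp_add, hδ]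
    push_cast
    ring_nf
  calc _ ≤ 2 * (2 * ‖δ‖) := by
        rw [factor, norm_mul]
        gcongr
        exact norm_exp_sub_one_le hδ_one
    _ ≤ 2 * (2 * (‖s‖ / n ^ 2)) := by gcongr
    _ = 4 * ‖s‖ / n ^ 2 := by ring

lemma norm_kusminWeight_sub_succ_le (hn : 0 < n) (hs : s ≠ 0) (hsn : 2 * ‖s‖ ≤ n) :
    ‖kusminWeight s n - kusminWeight s (n + 1)‖ ≤ 128 / ‖s‖ := by
  have hn1 : (1 : ℝ) ≤ n := Nat.one_le_cast.mpr hn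
  have hs' : 0 < ‖s‖ := norm_pos_iff.mpr hs
  have hsn' : 2 * ‖s‖ ≤ (n + 1 : ℕ) := by push_cast; linarith
  have weight_diff : kusminWeight s n - kusminWeight s (n + 1) =
      (cexp (-s * logStep (n + 1)) - cexp (-s * logStep n)) *
        (kusminWeight s n * kusminWeight s (n + 1)) := by
    rw [kusminWeight, kusminWeight, inv_sub_inv (exp_neg_mul_logStep_sub_one_ne_zero hn hs hsn)
      (exp_neg_mul_logStep_sub_one_ne_zero n.succ_pos hs hsn'), sub_sub_sub_cancel_right,
      div_eq_mul_inv, mul_inv]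
  rw [weight_diff, norm_mul, norm_mul]
  calc _ ≤ 4 * ‖s‖ / n ^ 2 * (4 * n / ‖s‖ * (4 * (n + 1 : ℕ) / ‖s‖)) := by
        gcongr
        · exact norm_exp_logStep_succ_sub_le hn hsn
        · exact norm_kusminWeight_le hn hs hsn
        · exact norm_kusminWeight_le n.succ_pos hs hsn'
    _ = 64 * (1 + 1 / n) / ‖s‖ := by push_cast; field_simp; ring
    _ ≤ 128 / ‖s‖ := by
        have : (1 : ℝ) / n ≤ 1 := (div_le_one (by linarith)).mpr hn1
        gcongr
        linarith

end Weight

lemma norm_natCast_cpow_neg_of_re_eq_half {s : ℂ} (hs : s.re = 1 / 2) {n : ℕ} (hn : 0 < n) :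
    ‖(n : ℂ) ^ (-s)‖ = 1 / √n := by
  rw [norm_natCast_cpow_of_pos hn, neg_re, hs, Real.rpow_neg (Nat.cast_nonneg n),
    ← Real.sqrt_eq_rpow, one_div]

theorem norm_sum_Ico_natCast_cpow_neg_le {s : ℂ} (hs : s.re = 1 / 2) {N M : ℕ} (hN : 2 * ‖s‖ ≤ N)
    (hNM : N ≤ M) : ‖∑ n ∈ Finset.Ico N M, (n : ℂ) ^ (-s)‖ ≤ 264 * √M / ‖s‖ := by
  have hs0 : s ≠ 0 := fun h => by norm_num [h] at hs
  have hNpos : 0 < N := Nat.cast_pos.mp ((by positivity : 0 < 2 * ‖s‖).trans_le hN)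
  have hlarge {n : ℕ} (hn : N ≤ n) : 2 * ‖s‖ ≤ n := hN.trans (Nat.cast_le.mpr hn)
  have boundary {n : ℕ} (hn : N ≤ n) : ‖kusminWeight s n * (n : ℂ) ^ (-s)‖ ≤ 4 * √n / ‖s‖ := by
    calc _ ≤ 4 * n / ‖s‖ * (1 / √n) := by
          rw [norm_mul, norm_natCast_cpow_neg_of_re_eq_half hs (hNpos.trans_le hn)]
          gcongr
          exact norm_kusminWeight_le (hNpos.trans_le hn) hs0 (hlarge hn)
      _ = 4 * (n / √n) / ‖s‖ := by ring
      _ = 4 * √n / ‖s‖ := by rw [Real.div_sqrt]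
  have interior : ‖∑ n ∈ Finset.Ico N M,
      (kusminWeight s n - kusminWeight s (n + 1)) * ((n + 1 : ℕ) : ℂ) ^ (-s)‖ ≤
        128 / ‖s‖ * (2 * √M) := by
    calc _ ≤ ∑ n ∈ Finset.Ico N M, 128 / ‖s‖ * (1 / √((n + 1 : ℕ) : ℝ)) := by
          refine norm_sum_le_of_le _ fun n hn => ?_
          have hn := (Finset.mem_Ico.mp hn).1
          rw [norm_mul, norm_natCast_cpow_neg_of_re_eq_half hs n.succ_pos]
          gcongr
          exact norm_kusminWeight_sub_succ_le (hNpos.trans_le hn) hs0 (hlarge hn)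
      _ = 128 / ‖s‖ * ∑ n ∈ Finset.Ico (N + 1) (M + 1), 1 / √(n : ℝ) := by
          rw [← Finset.mul_sum, Finset.sum_Ico_add' (fun n : ℕ => 1 / √(n : ℝ))]
      _ ≤ 128 / ‖s‖ * ∑ n ∈ Finset.Icc 1 M, 1 / √(n : ℝ) := by
          gcongr
          intro n hn
          rw [Finset.mem_Ico] at hn
          exact Finset.mem_Icc.mpr ⟨by lia, by lia⟩
      _ ≤ 128 / ‖s‖ * (2 * √M) := by
          gcongr
          exact sum_Icc_one_div_sqrt_le M
  rw [sum_Ico_eq_of_eq_mul_sub (g := kusminWeight s) (fun n hn =>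
    natCast_cpow_neg_eq_kusminWeight_mul (hNpos.trans_le hn) hs0 (hlarge hn)) hNM]
  have hsqrt : 4 * √N / ‖s‖ ≤ 4 * √M / ‖s‖ := by gcongr
  calc _ ≤ 4 * √M / ‖s‖ + 4 * √N / ‖s‖ + 128 / ‖s‖ * (2 * √M) :=
        norm_add_le_of_le (norm_sub_le_of_le (boundary hNM) (boundary le_rfl)) interior
    _ ≤ 4 * √M / ‖s‖ + 4 * √M / ‖s‖ + 128 / ‖s‖ * (2 * √M) := by gcongr
    _ = 264 * √M / ‖s‖ := by ring

end KusminLandau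

section EulerMaclaurin

theorem norm_trapezoid_sub_le {E : Type*} [NormedAddCommGroup E] [NormedSpace ℝ E]
    {F f f₁ f₂ : ℝ → E} {a b K : ℝ} (hab : a ≤ b)
    (hF : ∀ x ∈ Set.Icc a b, HasDerivAt F (f x) x)
    (hf : ∀ x ∈ Set.Icc a b, HasDerivAt f (f₁ x) x)
    (hf₁ : ∀ x ∈ Set.Icc a b, HasDerivAt f₁ (f₂ x) x)
    (hK : ∀ x ∈ Set.Icc a b, ‖f₂ x‖ ≤ K) :
    ‖((b - a) / 2) • (f a + f b) - (F b - F a)‖ ≤ K * (b - a) ^ 3 / 8 := by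
  set Φ : ℝ → E := fun x =>
    ((x - a) * (x - b) / 2) • f₁ x - (x - (a + b) / 2) • f x + F x with hΦ
  have hasDerivAt_Φ (x : ℝ) (hx : x ∈ Set.Icc a b) :
      HasDerivAt Φ (((x - a) * (x - b) / 2) • f₂ x) x := by
    have hquad : HasDerivAt (fun y : ℝ => (y - a) * (y - b) / 2) (x - (a + b) / 2) x := by
      refine ((((hasDerivAt_id x).sub_const a).mul
        ((hasDerivAt_id x).sub_const b)).div_const 2).congr_deriv ?_
      simp only [id]
      ring
    have hlin : HasDerivAt (fun y : ℝ => y - (a + b) / 2) 1 x := (hasDerivAt_id x).sub_const _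
    refine (((hquad.smul (hf₁ x hx)).sub (hlin.smul (hf x hx))).add (hF x hx)).congr_deriv ?_
    module
  have hderiv (x : ℝ) (hx : x ∈ Set.Ico a b) :
      ‖((x - a) * (x - b) / 2) • f₂ x‖ ≤ (b - a) ^ 2 / 8 * K := by
    have hprod : 0 ≤ (x - a) * (b - x) :=
      mul_nonneg (sub_nonneg.mpr hx.1) (sub_nonneg.mpr hx.2.le)
    have hweight : |(x - a) * (x - b) / 2| ≤ (b - a) ^ 2 / 8 :=
      abs_le.mpr ⟨by linarith [sq_nonneg (2 * x - a - b)],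
        by linarith [sq_nonneg (2 * x - a - b), sq_nonneg (b - a)]⟩
    rw [norm_smul, Real.norm_eq_abs]
    gcongr
    exact hK x (Set.Ico_subset_Icc_self hx)
  have key := norm_image_sub_le_of_norm_deriv_le_segment'
    (fun x hx => (hasDerivAt_Φ x hx).hasDerivWithinAt) hderiv b (Set.right_mem_Icc.mpr hab)
  have endpoints : ((b - a) / 2) • (f a + f b) - (F b - F a) = -(Φ b - Φ a) := by
    simp only [hΦ, sub_self, mul_zero, zero_mul, zero_div, zero_smul]
    module
  rw [endpoints, norm_neg]
  exact key.trans_eq (by ring)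

lemma hasDerivAt_ofReal_cpow_of_pos {x : ℝ} (hx : 0 < x) (c : ℂ) :
    HasDerivAt (fun y : ℝ => (y : ℂ) ^ c) (c * (x : ℂ) ^ (c - 1)) x := by
  simpa using ((hasDerivAt_id (x : ℂ)).cpow_const (c := c) (.inl hx)).comp_ofReal

lemma sum_range_term (f : ℕ → ℂ) (s : ℂ) (N : ℕ) :
    ∑ n ∈ Finset.range N, LSeries.term f s n = ∑ n ∈ Finset.Ico 1 N, f n * (n : ℂ) ^ (-s) := by
  rw [Finset.range_eq_Ico]
  refine (Finset.sum_subset (Finset.Ico_subset_Ico_left zero_le_one) fun n hn hn' => ?_).symm.trans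
    (Finset.sum_congr rfl fun n hn => ?_)
  · obtain rfl : n = 0 := by
      simp only [Finset.mem_Ico] at hn hn'
      lia
    exact LSeries.term_zero f s
  · have hn0 : n ≠ 0 := Nat.one_le_iff_ne_zero.mp (Finset.mem_Ico.mp hn).1
    rw [LSeries.term_of_ne_zero hn0, cpow_neg, div_eq_mul_inv]

/-- The Euler–Maclaurin approximation of order one, with cut-off `N`, to `(s - 1) ζ(s)`. The factor
`s - 1` removes the pole, so that the expression is entire in `s`. -/
noncomputable def zetaEulerMaclaurin (N : ℕ) (s : ℂ) : ℂ :=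
  (s - 1) * ∑ n ∈ Finset.Ico 1 N, (n : ℂ) ^ (-s) + (N : ℂ) ^ (1 - s) + (s - 1) * (N : ℂ) ^ (-s) / 2

lemma differentiable_zetaEulerMaclaurin {N : ℕ} (hN : 0 < N) :
    Differentiable ℂ (zetaEulerMaclaurin N) := by
  have hpow {n : ℕ} (hn : 0 < n) {g : ℂ → ℂ} (hg : Differentiable ℂ g) :
      Differentiable ℂ fun s => (n : ℂ) ^ g s :=
    fun s => (hg s).const_cpow (.inl (Nat.cast_ne_zero.mpr hn.ne'))
  have hsum : Differentiable ℂ fun s : ℂ => ∑ n ∈ Finset.Ico 1 N, (n : ℂ) ^ (-s) :=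
    Differentiable.fun_sum fun n hn => hpow (Finset.mem_Ico.mp hn).1 differentiable_neg
  exact (((differentiable_id.sub_const 1).mul hsum).add (hpow hN (by fun_prop))).add
    (((differentiable_id.sub_const 1).mul (hpow hN differentiable_neg)).div_const 2)

lemma zetaEulerMaclaurin_succ_sub {n : ℕ} (hn : 0 < n) (s : ℂ) :
    zetaEulerMaclaurin (n + 1) s - zetaEulerMaclaurin n s =
      (s - 1) * ((n : ℂ) ^ (-s) + ((n + 1 : ℕ) : ℂ) ^ (-s)) / 2 -
        ((n : ℂ) ^ (1 - s) - ((n + 1 : ℕ) : ℂ) ^ (1 - s)) := by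
  rw [zetaEulerMaclaurin, zetaEulerMaclaurin, Finset.sum_Ico_succ_top hn]
  ring

lemma norm_zetaEulerMaclaurin_succ_sub_le {n : ℕ} (hn : 0 < n) {s : ℂ} (hs : 0 < s.re) :
    ‖zetaEulerMaclaurin (n + 1) s - zetaEulerMaclaurin n s‖ ≤
      ‖s - 1‖ * ‖s‖ * ‖s + 1‖ * ((n : ℝ) ^ (-s.re) * ((n : ℝ) ^ 2)⁻¹) := by
  set K : ℝ := ‖s - 1‖ * ‖s‖ * ‖s + 1‖ * ((n : ℝ) ^ (-s.re) * ((n : ℝ) ^ 2)⁻¹) with hK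
  have hn' : (0 : ℝ) < n := Nat.cast_pos.mpr hn
  have hpos {x : ℝ} (hx : x ∈ Set.Icc (n : ℝ) (n + 1)) : 0 < x := hn'.trans_le hx.1
  have second_derivative {x : ℝ} (hx : x ∈ Set.Icc (n : ℝ) (n + 1)) :
      ‖(s - 1) * (-s * ((-s - 1) * (x : ℂ) ^ (-s - 1 - 1)))‖ ≤ K := by
    have hpow : x ^ (-s.re - 1 - 1) ≤ (n : ℝ) ^ (-s.re) * ((n : ℝ) ^ 2)⁻¹ := by
      rw [← Real.rpow_natCast, ← Real.rpow_neg hn'.le, ← Real.rpow_add hn',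
        show -s.re - 1 - 1 = -s.re + -((2 : ℕ) : ℝ) by push_cast; ring]
      exact Real.rpow_le_rpow_of_nonpos hn' hx.1 (by push_cast; linarith)
    have hfactor : ‖-s - 1‖ = ‖s + 1‖ := by rw [← norm_neg, neg_sub, sub_neg_eq_add, add_comm]
    simp only [norm_mul, norm_neg, hfactor, norm_cpow_eq_rpow_re_of_pos (hpos hx), sub_re, neg_re,
      one_re]
    rw [hK, ← mul_assoc, ← mul_assoc]
    gcongr
  have trapezoid := norm_trapezoid_sub_le
    (F := fun x : ℝ => -(x : ℂ) ^ (1 - s)) (f := fun x : ℝ => (s - 1) * (x : ℂ) ^ (-s))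
    (f₁ := fun x : ℝ => (s - 1) * (-s * (x : ℂ) ^ (-s - 1)))
    (f₂ := fun x : ℝ => (s - 1) * (-s * ((-s - 1) * (x : ℂ) ^ (-s - 1 - 1))))
    (by linarith : (n : ℝ) ≤ n + 1)
    (fun x hx => (hasDerivAt_ofReal_cpow_of_pos (hpos hx) (1 - s)).neg.congr_deriv (by ring_nf))
    (fun x hx => (hasDerivAt_ofReal_cpow_of_pos (hpos hx) (-s)).const_mul _)
    (fun x hx => ((hasDerivAt_ofReal_cpow_of_pos (hpos hx) (-s - 1)).const_mul _).const_mul _)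
    (fun x hx => second_derivative hx)
  rw [add_sub_cancel_left, one_pow, mul_one] at trapezoid
  have hK0 : 0 ≤ K := by positivity
  refine le_trans (le_of_eq ?_) (trapezoid.trans (by linarith))
  rw [zetaEulerMaclaurin_succ_sub hn, Complex.real_smul]
  push_cast
  ring_nf

lemma norm_zetaEulerMaclaurin_sub_le {N M : ℕ} (hN : 0 < N) (hNM : N ≤ M) {s : ℂ}
    (hs : 0 < s.re) :
    ‖zetaEulerMaclaurin M s - zetaEulerMaclaurin N s‖ ≤
      2 * ‖s - 1‖ * ‖s‖ * ‖s + 1‖ * (N : ℝ) ^ (-s.re - 1) := by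
  have hN' : (0 : ℝ) < N := Nat.cast_pos.mpr hN
  have hsq : ∑ n ∈ Finset.Ico N M, ((n : ℝ) ^ 2)⁻¹ ≤ 2 / N := by
    obtain ⟨k, rfl⟩ := Nat.exists_eq_succ_of_ne_zero hN.ne'
    rw [Nat.succ_eq_add_one, Finset.Ico_add_one_left_eq_Ioo, Nat.cast_succ]
    exact sum_Ioo_inv_sq_le k M
  calc ‖zetaEulerMaclaurin M s - zetaEulerMaclaurin N s‖
      ≤ ∑ n ∈ Finset.Ico N M, ‖zetaEulerMaclaurin (n + 1) s - zetaEulerMaclaurin n s‖ := by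
        rw [← Finset.sum_Ico_sub (zetaEulerMaclaurin · s) hNM]
        exact norm_sum_le _ _
    _ ≤ ∑ n ∈ Finset.Ico N M,
          ‖s - 1‖ * ‖s‖ * ‖s + 1‖ * ((N : ℝ) ^ (-s.re) * ((n : ℝ) ^ 2)⁻¹) := by
        refine Finset.sum_le_sum fun n hn => ?_
        have hNn := (Finset.mem_Ico.mp hn).1
        refine (norm_zetaEulerMaclaurin_succ_sub_le (hN.trans_le hNn) hs).trans ?_
        have := Real.rpow_le_rpow_of_nonpos hN' (Nat.cast_le.mpr hNn : (N : ℝ) ≤ n)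
          (neg_nonpos.mpr hs.le)
        gcongr
    _ = ‖s - 1‖ * ‖s‖ * ‖s + 1‖ * ((N : ℝ) ^ (-s.re) * ∑ n ∈ Finset.Ico N M, ((n : ℝ) ^ 2)⁻¹) := by
        rw [Finset.mul_sum, Finset.mul_sum]
    _ ≤ ‖s - 1‖ * ‖s‖ * ‖s + 1‖ * ((N : ℝ) ^ (-s.re) * (2 / N)) := by gcongr
    _ = 2 * ‖s - 1‖ * ‖s‖ * ‖s + 1‖ * (N : ℝ) ^ (-s.re - 1) := by
        rw [Real.rpow_sub_one hN'.ne']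
        ring

lemma tendsto_zetaEulerMaclaurin_of_one_lt_re {s : ℂ} (hs : 1 < s.re) :
    Tendsto (fun N => zetaEulerMaclaurin N s) atTop (𝓝 (riemannZeta₁ s)) := by
  have hs1 : s ≠ 1 := by
    rintro rfl
    simp at hs
  have hpow {w : ℂ} (hw : w.re < 0) : Tendsto (fun N : ℕ => (N : ℂ) ^ w) atTop (𝓝 0) := by
    rw [tendsto_zero_iff_norm_tendsto_zero]
    refine ((tendsto_rpow_neg_atTop (neg_pos.mpr hw)).comp tendsto_natCast_atTop_atTop).congr' ?_
    filter_upwards [eventually_gt_atTop 0] with N hN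
    rw [Function.comp_apply, neg_neg, norm_natCast_cpow_of_pos hN]
  have hsum : Tendsto (fun N : ℕ => ∑ n ∈ Finset.Ico 1 N, (n : ℂ) ^ (-s)) atTop
      (𝓝 (riemannZeta s)) := by
    refine (LSeriesHasSum_one hs).tendsto_sum_nat.congr fun N => ?_
    simp only [sum_range_term, Pi.one_apply, one_mul]
  have := ((hsum.const_mul (s - 1)).add (hpow (w := 1 - s) (by simpa using hs))).add
    (((hpow (w := -s) (by simpa using one_pos.trans hs)).const_mul (s - 1)).div_const 2)
  rw [riemannZeta_eq_inv_sub_mul hs1, mul_inv_cancel_left₀ (sub_ne_zero.mpr hs1)] at this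
  simpa [zetaEulerMaclaurin] using this

lemma differentiableOn_tsum_zetaEulerMaclaurin_sub :
    DifferentiableOn ℂ
      (fun s => ∑' k : ℕ, (zetaEulerMaclaurin (k + 2) s - zetaEulerMaclaurin (k + 1) s))
      {s | 0 < s.re} := by
  intro s₀ hs₀
  set R : ℝ := ‖s₀‖ + 1
  set U : Set ℂ := {s | 0 < s.re} ∩ Metric.ball 0 R
  have hU : IsOpen U := (isOpen_lt continuous_const continuous_re).inter Metric.isOpen_ball
  have hs₀U : s₀ ∈ U := ⟨hs₀, by simp [R]⟩
  have hsq : Summable fun k : ℕ => (((k + 1 : ℕ) : ℝ) ^ 2)⁻¹ :=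
    (summable_nat_add_iff 1).mpr (Real.summable_nat_pow_inv.mpr one_lt_two)
  refine ((differentiableOn_tsum_of_summable_norm
    (hsq.mul_left ((R + 1) * R * (R + 1))) (fun k => ?_) hU fun k s hs => ?_).differentiableAt
      (hU.mem_nhds hs₀U)).differentiableWithinAt
  · exact ((differentiable_zetaEulerMaclaurin k.succ.succ_pos).sub
      (differentiable_zetaEulerMaclaurin k.succ_pos)).differentiableOn
  · have hsR : ‖s‖ ≤ R := (mem_ball_zero_iff.mp hs.2).le
    have hpow : ((k + 1 : ℕ) : ℝ) ^ (-s.re) ≤ 1 :=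
      Real.rpow_le_one_of_one_le_of_nonpos (mod_cast k.succ_pos) (neg_nonpos.mpr (le_of_lt hs.1))
    have hsub : ‖s - 1‖ ≤ R + 1 := (norm_sub_le _ _).trans (by simpa using hsR)
    have hadd : ‖s + 1‖ ≤ R + 1 := (norm_add_le _ _).trans (by simpa using hsR)
    calc ‖zetaEulerMaclaurin (k + 2) s - zetaEulerMaclaurin (k + 1) s‖
        ≤ _ := norm_zetaEulerMaclaurin_succ_sub_le k.succ_pos hs.1
      _ ≤ (R + 1) * R * (R + 1) * (1 * (((k + 1 : ℕ) : ℝ) ^ 2)⁻¹) := by gcongr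
      _ = (R + 1) * R * (R + 1) * (((k + 1 : ℕ) : ℝ) ^ 2)⁻¹ := by rw [one_mul]

lemma tendsto_zetaEulerMaclaurin_tsum {s : ℂ} (hs : 0 < s.re) :
    Tendsto (fun N => zetaEulerMaclaurin N s) atTop (𝓝 (zetaEulerMaclaurin 1 s +
      ∑' k : ℕ, (zetaEulerMaclaurin (k + 2) s - zetaEulerMaclaurin (k + 1) s))) := by
  have hsummable :
      Summable fun k : ℕ => zetaEulerMaclaurin (k + 2) s - zetaEulerMaclaurin (k + 1) s := by
    refine .of_norm_bounded (((summable_nat_add_iff 1).mpr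
      (Real.summable_nat_rpow.mpr (by linarith : -s.re - 2 < -1))).mul_left
        (‖s - 1‖ * ‖s‖ * ‖s + 1‖)) fun k => ?_
    refine (norm_zetaEulerMaclaurin_succ_sub_le k.succ_pos hs).trans_eq ?_
    rw [Real.rpow_sub (by positivity), Real.rpow_two, div_eq_mul_inv]
  rw [← tendsto_add_atTop_iff_nat 1]
  refine (hsummable.hasSum.tendsto_sum_nat.const_add _).congr fun N => ?_
  rw [Finset.sum_range_sub (fun k => zetaEulerMaclaurin (k + 1) s), add_sub_cancel]

theorem tendsto_zetaEulerMaclaurin {s : ℂ} (hs : 0 < s.re) :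
    Tendsto (fun N => zetaEulerMaclaurin N s) atTop (𝓝 (riemannZeta₁ s)) := by
  set g : ℂ → ℂ := fun s => zetaEulerMaclaurin 1 s +
    ∑' k : ℕ, (zetaEulerMaclaurin (k + 2) s - zetaEulerMaclaurin (k + 1) s)
  have hopen : IsOpen {s : ℂ | 0 < s.re} := isOpen_lt continuous_const continuous_re
  have hg : AnalyticOnNhd ℂ g {s | 0 < s.re} :=
    ((differentiable_zetaEulerMaclaurin one_pos).differentiableOn.add
      differentiableOn_tsum_zetaEulerMaclaurin_sub).analyticOnNhd hopen
  have heq : ∀ᶠ s in 𝓝 (2 : ℂ), g s = riemannZeta₁ s := by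
    filter_upwards [(isOpen_lt continuous_const continuous_re).mem_nhds
      (by simp : (2 : ℂ) ∈ {s : ℂ | 1 < s.re})] with s hs
    exact tendsto_nhds_unique (tendsto_zetaEulerMaclaurin_tsum (one_pos.trans hs))
      (tendsto_zetaEulerMaclaurin_of_one_lt_re hs)
  have := hg.eqOn_of_preconnected_of_eventuallyEq
    (differentiable_riemannZeta₁.differentiableOn.analyticOnNhd hopen)
    (convex_halfSpace_re_gt 0).isPreconnected (by simp : (2 : ℂ) ∈ {s : ℂ | 0 < s.re}) heq hs
  exact this ▸ tendsto_zetaEulerMaclaurin_tsum hs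

theorem norm_riemannZeta_sub_sum_sub_le {s : ℂ} (hs : 0 < s.re) (hs1 : s ≠ 1) {N : ℕ}
    (hN : 0 < N) :
    ‖riemannZeta s - (∑ n ∈ Finset.Ico 1 N, (n : ℂ) ^ (-s) + (N : ℂ) ^ (1 - s) / (s - 1)
      + (N : ℂ) ^ (-s) / 2)‖ ≤ 2 * ‖s‖ * ‖s + 1‖ * (N : ℝ) ^ (-s.re - 1) := by
  have hs1' : s - 1 ≠ 0 := sub_ne_zero.mpr hs1
  have key : ‖riemannZeta₁ s - zetaEulerMaclaurin N s‖ ≤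
      2 * ‖s - 1‖ * ‖s‖ * ‖s + 1‖ * (N : ℝ) ^ (-s.re - 1) := by
    refine le_of_tendsto ((tendsto_zetaEulerMaclaurin hs).sub_const _).norm ?_
    filter_upwards [eventually_ge_atTop N] with M hM
    exact norm_zetaEulerMaclaurin_sub_le hN hM hs
  have factor : riemannZeta₁ s - zetaEulerMaclaurin N s = (s - 1) * (riemannZeta s -
      (∑ n ∈ Finset.Ico 1 N, (n : ℂ) ^ (-s) + (N : ℂ) ^ (1 - s) / (s - 1)
        + (N : ℂ) ^ (-s) / 2)) := by
    rw [riemannZeta_eq_inv_sub_mul hs1, zetaEulerMaclaurin]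
    field_simp
  rw [factor, norm_mul] at key
  exact le_of_mul_le_mul_left (key.trans_eq (by ring)) (norm_pos_iff.mpr hs1')

end EulerMaclaurin

section CriticalLine

lemma norm_riemannZeta_sub_sum_Ico_le_of_le {s : ℂ} (hs : s.re = 1 / 2) {N M : ℕ}
    (hN : 2 * ‖s‖ ≤ N) (hNM : N ≤ M) :
    ‖riemannZeta s - ∑ n ∈ Finset.Ico 1 N, (n : ℂ) ^ (-s)‖ ≤
      264 * √M / ‖s‖ + √M / ‖s - 1‖ + 1 / √M + 2 * ‖s‖ * ‖s + 1‖ / (M * √M) := by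
  have hs_norm : 1 / 2 ≤ ‖s‖ := hs ▸ re_le_norm s
  have hs1 : s ≠ 1 := by
    rintro rfl
    norm_num at hs
  have hN0 : 0 < N := Nat.cast_pos.mp ((by linarith : 0 < 2 * ‖s‖).trans_le hN)
  have hM0 : 0 < M := hN0.trans_le hNM
  have eulerMaclaurin := norm_riemannZeta_sub_sum_sub_le (hs ▸ half_pos one_pos) hs1 hM0
  have hpole : ‖(M : ℂ) ^ (1 - s) / (s - 1)‖ = √M / ‖s - 1‖ := by
    rw [norm_div, norm_natCast_cpow_of_pos hM0, sub_re, one_re, hs, sub_half, Real.sqrt_eq_rpow]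
  have hlast : ‖(M : ℂ) ^ (-s) / 2‖ ≤ 1 / √M := by
    rw [norm_div, norm_natCast_cpow_neg_of_re_eq_half hs hM0, Complex.norm_ofNat]
    exact half_le_self (by positivity)
  have hremainder : (M : ℝ) ^ (-s.re - 1) = (M * √M)⁻¹ := by
    rw [hs, Real.rpow_sub_one (Nat.cast_ne_zero.mpr hM0.ne'), Real.rpow_neg M.cast_nonneg,
      ← Real.sqrt_eq_rpow, mul_inv_rev, div_eq_mul_inv]
  rw [hremainder, ← div_eq_mul_inv] at eulerMaclaurin
  have split : riemannZeta s - ∑ n ∈ Finset.Ico 1 N, (n : ℂ) ^ (-s) =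
      ∑ n ∈ Finset.Ico N M, (n : ℂ) ^ (-s) + (M : ℂ) ^ (1 - s) / (s - 1) + (M : ℂ) ^ (-s) / 2 +
        (riemannZeta s - (∑ n ∈ Finset.Ico 1 M, (n : ℂ) ^ (-s) + (M : ℂ) ^ (1 - s) / (s - 1)
          + (M : ℂ) ^ (-s) / 2)) := by
    rw [← Finset.sum_Ico_consecutive _ hN0 hNM]
    ring
  rw [split]
  exact norm_add₄_le.trans (add_le_add (add_le_add
    (add_le_add (norm_sum_Ico_natCast_cpow_neg_le hs hN hNM) hpole.le) hlast) eulerMaclaurin)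

theorem norm_riemannZeta_sub_sum_Ico_le {s : ℂ} (hs : s.re = 1 / 2) (him : 1 ≤ s.im) {N : ℕ}
    (hN : 3 * s.im ≤ N) (hN' : N ≤ 10 * s.im) :
    ‖riemannZeta s - ∑ n ∈ Finset.Ico 1 N, (n : ℂ) ^ (-s)‖ ≤ 1070 * s.im ^ (-(1 / 4) : ℝ) := by
  obtain ⟨a, ha, hsa⟩ : ∃ a : ℝ, 1 ≤ a ∧ s.im = a ^ 4 :=
    ⟨s.im ^ (1 / 4 : ℝ), Real.one_le_rpow him (by norm_num), by
      rw [← Real.rpow_natCast, ← Real.rpow_mul (by linarith)]; norm_num⟩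
  have ha0 : 0 < a := one_pos.trans_le ha
  have ha46 : a ^ 4 ≤ a ^ 6 := pow_le_pow_right₀ ha (by norm_num)
  have ha3 : a ≤ a ^ 3 := le_self_pow₀ ha (by norm_num)
  have hs_lower : a ^ 4 ≤ ‖s‖ := hsa ▸ (le_abs_self _).trans (abs_im_le_norm s)
  have hs_sub : a ^ 4 ≤ ‖s - 1‖ := by
    simpa [hsa] using (le_abs_self _).trans (abs_im_le_norm (s - 1))
  have hs_upper : ‖s‖ ≤ 3 / 2 * a ^ 4 := by
    have := norm_le_abs_re_add_abs_im s
    rw [hs, abs_of_pos (by norm_num), abs_of_pos (by linarith)] at this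
    linarith
  have hs_add : ‖s + 1‖ ≤ 5 / 2 * a ^ 4 := by
    have := norm_add_le s 1
    rw [norm_one] at this
    linarith
  set M : ℕ := N + ⌈a ^ 6⌉₊ with hM
  have hM_lower : a ^ 6 ≤ M := by
    rw [hM, Nat.cast_add]
    linarith [Nat.le_ceil (a ^ 6), N.cast_nonneg (α := ℝ)]
  have sqrt_lower : a ^ 3 ≤ √M := Real.le_sqrt_of_sq_le (by linarith [pow_mul a 3 2])
  have sqrt_upper : √M ≤ 4 * a ^ 3 := by
    refine Real.sqrt_le_iff.mpr ⟨by positivity, ?_⟩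
    rw [hM, Nat.cast_add, mul_pow, ← pow_mul, show 3 * 2 = 6 from rfl]
    linarith [Nat.ceil_lt_add_one (by positivity : 0 ≤ a ^ 6)]
  calc ‖riemannZeta s - ∑ n ∈ Finset.Ico 1 N, (n : ℂ) ^ (-s)‖
      ≤ 264 * √M / ‖s‖ + √M / ‖s - 1‖ + 1 / √M + 2 * ‖s‖ * ‖s + 1‖ / (M * √M) :=
        norm_riemannZeta_sub_sum_Ico_le_of_le hs (by linarith) (Nat.le_add_right _ _)
    _ ≤ 264 * (4 * a ^ 3) / a ^ 4 + 4 * a ^ 3 / a ^ 4 + 1 / a +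
          2 * (3 / 2 * a ^ 4) * (5 / 2 * a ^ 4) / (a ^ 6 * a ^ 3) := by
        gcongr
        linarith
    _ = 1068.5 * a⁻¹ := by field_simp; norm_num
    _ ≤ 1070 * a⁻¹ := by gcongr; norm_num
    _ = 1070 * s.im ^ (-(1 / 4) : ℝ) := by
        rw [hsa, ← Real.rpow_natCast, ← Real.rpow_mul ha0.le, ← Real.rpow_neg_one]
        norm_num

end CriticalLine

section LSeriesTail

theorem norm_LSeries_sub_sum_Ico_le {f : ℕ → ℂ} {s₀ s : ℂ} (hf : LSeriesSummable f s₀)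
    (hs : s₀.re ≤ s.re) {N : ℕ} (hN : 0 < N) :
    ‖LSeries f s - ∑ n ∈ Finset.Ico 1 N, f n * (n : ℂ) ^ (-s)‖ ≤
      (N : ℝ) ^ (s₀.re - s.re) * ∑' n, ‖LSeries.term f s₀ n‖ := by
  have hterm {n : ℕ} (hn : N ≤ n) :
      ‖LSeries.term f s n‖ ≤ (N : ℝ) ^ (s₀.re - s.re) * ‖LSeries.term f s₀ n‖ := by
    have hn0 : 0 < n := hN.trans_le hn
    have hpow : (n : ℝ) ^ (s₀.re - s.re) ≤ (N : ℝ) ^ (s₀.re - s.re) :=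
      Real.rpow_le_rpow_of_nonpos (Nat.cast_pos.mpr hN) (Nat.cast_le.mpr hn) (sub_nonpos.mpr hs)
    rw [LSeries.norm_term_eq, LSeries.norm_term_eq, if_neg hn0.ne', if_neg hn0.ne']
    calc ‖f n‖ / (n : ℝ) ^ s.re
        = (n : ℝ) ^ (s₀.re - s.re) * (‖f n‖ / (n : ℝ) ^ s₀.re) := by
          rw [Real.rpow_sub (Nat.cast_pos.mpr hn0)]
          field_simp
      _ ≤ (N : ℝ) ^ (s₀.re - s.re) * (‖f n‖ / (n : ℝ) ^ s₀.re) :=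
        mul_le_mul_of_nonneg_right hpow (by positivity)
  have hnorm : Summable fun n => ‖LSeries.term f s₀ n‖ := Summable.norm hf
  rw [← sum_range_term, LSeries, ← (hf.of_re_le_re hs).sum_add_tsum_nat_add N, add_sub_cancel_left]
  calc ‖∑' n, LSeries.term f s (n + N)‖
      ≤ (N : ℝ) ^ (s₀.re - s.re) * ∑' n, ‖LSeries.term f s₀ (n + N)‖ :=
        tsum_of_norm_bounded (((summable_nat_add_iff N).mpr hnorm).hasSum.mul_left _)
          fun n => hterm (Nat.le_add_left N n)
    _ ≤ (N : ℝ) ^ (s₀.re - s.re) * ∑' n, ‖LSeries.term f s₀ n‖ := by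
        rw [← hnorm.sum_add_tsum_nat_add N]
        gcongr
        exact le_add_of_nonneg_left (Finset.sum_nonneg fun n _ => norm_nonneg _)

end LSeriesTail

section DoubleSeries

lemma natCast_add_rpow_neg_le {m n : ℕ} (hm : 0 < m) (hn : 0 < n) {α β : ℝ} (hα : 0 ≤ α)
    (hβ : 0 ≤ β) : ((m + n : ℕ) : ℝ) ^ (-(α + β)) ≤ (m : ℝ) ^ (-α) * (n : ℝ) ^ (-β) := by
  have hm' : (0 : ℝ) < m := Nat.cast_pos.mpr hm
  have hn' : (0 : ℝ) < n := Nat.cast_pos.mpr hn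
  rw [neg_add, Real.rpow_add (by positivity)]
  exact mul_le_mul
    (Real.rpow_le_rpow_of_nonpos hm' (Nat.cast_le.mpr (Nat.le_add_right m n)) (neg_nonpos.mpr hα))
    (Real.rpow_le_rpow_of_nonpos hn' (Nat.cast_le.mpr (Nat.le_add_left n m)) (neg_nonpos.mpr hβ))
    (by positivity) (by positivity)

lemma summable_natCast_cpow_mul_natCast_add_cpow {s₁ s₂ : ℂ} (h₂ : 1 < s₂.re)
    (h₁₂ : 2 < s₁.re + s₂.re) :
    Summable fun p : ℕ × ℕ =>
      ((p.1 + 1 : ℕ) : ℂ) ^ (-s₁) * (((p.1 + 1) + (p.2 + 1) : ℕ) : ℂ) ^ (-s₂) := by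
  obtain ⟨α, hα, hα₁, hα₂⟩ : ∃ α : ℝ, 0 ≤ α ∧ 1 < s₁.re + α ∧ 1 < s₂.re - α := by
    refine ⟨max 0 ((s₂.re - s₁.re) / 2), le_max_left _ _, ?_, ?_⟩ <;>
    rcases max_cases 0 ((s₂.re - s₁.re) / 2) with h | h <;> linarith
  have hsum {x : ℝ} (hx : 1 < x) : Summable fun n : ℕ => ((n + 1 : ℕ) : ℝ) ^ (-x) :=
    (summable_nat_add_iff 1).mpr (Real.summable_nat_rpow.mpr (neg_lt_neg hx))
  refine .of_norm_bounded ((hsum hα₁).mul_of_nonneg (hsum hα₂) (fun _ => by positivity)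
    fun _ => by positivity) fun ⟨m, n⟩ => ?_
  have hadd : (((m + 1) + (n + 1) : ℕ) : ℝ) ^ (-s₂.re) ≤
      ((m + 1 : ℕ) : ℝ) ^ (-α) * ((n + 1 : ℕ) : ℝ) ^ (-(s₂.re - α)) := by
    simpa using natCast_add_rpow_neg_le m.succ_pos n.succ_pos hα (by linarith : 0 ≤ s₂.re - α)
  rw [norm_mul, norm_natCast_cpow_of_pos m.succ_pos,
    norm_natCast_cpow_of_pos (Nat.add_pos_left m.succ_pos _), neg_re, neg_re]
  dsimp only
  rw [neg_add, Real.rpow_add (by positivity), mul_assoc]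
  gcongr

/-- The partial sum `∑_{1 ≤ m < n} m ^ (-s)` of the Dirichlet series of `ζ(s)`; these are the
coefficients of `ζ₂(s, ·)` as a Dirichlet series in its second variable. -/
noncomputable def zetaPartialSum (s : ℂ) (n : ℕ) : ℂ := ∑ m ∈ Finset.Ico 1 n, (m : ℂ) ^ (-s)

theorem LSeriesHasSum_zetaPartialSum {s₁ s₂ : ℂ} (h₂ : 1 < s₂.re) (h₁₂ : 2 < s₁.re + s₂.re) :
    LSeriesHasSum (zetaPartialSum s₁) s₂ (∑' m : ℕ, ((m : ℂ) + 1) ^ (-s₁)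
      * ∑' n : ℕ, (((m : ℂ) + 1) + ((n : ℂ) + 1)) ^ (-s₂)) := by
  set f : ℕ × ℕ → ℂ := fun p =>
    ((p.1 + 1 : ℕ) : ℂ) ^ (-s₁) * (((p.1 + 1) + (p.2 + 1) : ℕ) : ℂ) ^ (-s₂) with hf
  have hsummable : Summable f := summable_natCast_cpow_mul_natCast_add_cpow h₂ h₁₂
  have iterated : ∑' p, f p = ∑' m : ℕ, ((m : ℂ) + 1) ^ (-s₁)
      * ∑' n : ℕ, (((m : ℂ) + 1) + ((n : ℂ) + 1)) ^ (-s₂) := by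
    rw [hsummable.tsum_prod]
    simp only [hf, tsum_mul_left, Nat.cast_add, Nat.cast_one]
  have antidiagonal (k : ℕ) : ∑ p ∈ Finset.HasAntidiagonal.antidiagonal k, f p =
      LSeries.term (zetaPartialSum s₁) s₂ (k + 2) := by
    rw [Finset.Nat.sum_antidiagonal_eq_sum_range_succ_mk, LSeries.term_of_ne_zero (by lia),
      zetaPartialSum, Finset.sum_Ico_eq_sum_range, Finset.sum_div]
    refine Finset.sum_congr rfl fun m hm => ?_
    have hmk : m + 1 + (k - m + 1) = k + 2 := by
      have := Finset.mem_range.mp hm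
      lia
    simp only [hf, hmk, add_comm 1 m, cpow_neg, div_eq_mul_inv]
  have regroup : HasSum (fun k => ∑ p ∈ Finset.HasAntidiagonal.antidiagonal k, f p) (∑' p, f p) :=
    (Finset.HasAntidiagonal.sigmaAntidiagonalEquivProd.hasSum_iff.mpr hsummable.hasSum).sigma
      fun k => Finset.sum_coe_sort (Finset.HasAntidiagonal.antidiagonal k) f ▸ hasSum_fintype _
  rw [LSeriesHasSum, ← hasSum_nat_add_iff' 2, ← iterated]
  simpa [antidiagonal, Finset.sum_range_succ, zetaPartialSum] using regroup

end DoubleSeries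

section Continuation

/-- The error `∑_{1 ≤ m < n} m ^ (-s) + n ^ (1 - s) / (s - 1) - ζ(s)` of the zeroth-order
Euler–Maclaurin approximation to `ζ(s)`. -/
noncomputable def zetaPartialSumError (s : ℂ) (n : ℕ) : ℂ :=
  zetaPartialSum s n + (n : ℂ) ^ (1 - s) / (s - 1) - riemannZeta s

lemma norm_zetaPartialSumError_le {s : ℂ} (hs : 0 < s.re) (hs1 : s ≠ 1) {n : ℕ} (hn : n ≠ 0) :
    ‖zetaPartialSumError s n‖ ≤ (1 + 2 * ‖s‖ * ‖s + 1‖) * (n : ℝ) ^ (-s.re) := by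
  have hn0 : 0 < n := Nat.pos_of_ne_zero hn
  have hn1 : (1 : ℝ) ≤ n := Nat.one_le_cast.mpr hn0
  have eulerMaclaurin := norm_riemannZeta_sub_sum_sub_le hs hs1 hn0
  have hpow : (n : ℝ) ^ (-s.re - 1) ≤ (n : ℝ) ^ (-s.re) :=
    Real.rpow_le_rpow_of_exponent_le hn1 (sub_one_lt _).le
  have hlast : ‖(n : ℂ) ^ (-s) / 2‖ ≤ (n : ℝ) ^ (-s.re) := by
    rw [norm_div, norm_natCast_cpow_of_pos hn0, neg_re, Complex.norm_ofNat]
    exact half_le_self (by positivity)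
  calc ‖zetaPartialSumError s n‖
      = ‖(n : ℂ) ^ (-s) / 2 + (riemannZeta s - (∑ m ∈ Finset.Ico 1 n, (m : ℂ) ^ (-s)
          + (n : ℂ) ^ (1 - s) / (s - 1) + (n : ℂ) ^ (-s) / 2))‖ := by
        rw [zetaPartialSumError, zetaPartialSum, ← norm_neg]
        ring_nf
    _ ≤ (n : ℝ) ^ (-s.re) + 2 * ‖s‖ * ‖s + 1‖ * (n : ℝ) ^ (-s.re - 1) :=
        (norm_add_le _ _).trans (add_le_add hlast eulerMaclaurin)
    _ ≤ (n : ℝ) ^ (-s.re) + 2 * ‖s‖ * ‖s + 1‖ * (n : ℝ) ^ (-s.re) := by gcongr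
    _ = (1 + 2 * ‖s‖ * ‖s + 1‖) * (n : ℝ) ^ (-s.re) := by ring

variable {s₁ : ℂ}

lemma abscissaOfAbsConv_zetaPartialSumError_le (hs₁ : 0 < s₁.re) (hs₁1 : s₁ ≠ 1) :
    LSeries.abscissaOfAbsConv (zetaPartialSumError s₁) ≤ ((1 - s₁.re : ℝ) : EReal) := by
  have := LSeries.abscissaOfAbsConv_le_of_le_const_mul_rpow
    ⟨_, fun n hn => norm_zetaPartialSumError_le hs₁ hs₁1 (n := n) hn⟩
  rwa [← EReal.coe_one, ← EReal.coe_add, neg_add_eq_sub] at this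

lemma LSeriesSummable_zetaPartialSumError (hs₁ : 0 < s₁.re) (hs₁1 : s₁ ≠ 1) {s₂ : ℂ}
    (h : 1 - s₁.re < s₂.re) : LSeriesSummable (zetaPartialSumError s₁) s₂ :=
  LSeriesSummable_of_abscissaOfAbsConv_lt_re
    ((abscissaOfAbsConv_zetaPartialSumError_le hs₁ hs₁1).trans_lt (EReal.coe_lt_coe h))

lemma LSeriesHasSum_natCast_cpow_one_sub {s₁ s₂ : ℂ} (h : 2 < s₁.re + s₂.re) :
    LSeriesHasSum (fun n => (n : ℂ) ^ (1 - s₁)) s₂ (riemannZeta (s₁ + s₂ - 1)) := by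
  have h1 : 1 < (s₁ + s₂ - 1).re := by
    rw [sub_re, add_re, one_re]
    linarith
  refine (LSeriesHasSum_one h1).congr_fun fun n => ?_
  rcases eq_or_ne n 0 with rfl | hn
  · rw [LSeries.term_zero, LSeries.term_zero]
  · rw [LSeries.term_of_ne_zero hn, LSeries.term_of_ne_zero hn, Pi.one_apply, one_div, ← cpow_neg,
      ← cpow_sub _ _ (Nat.cast_ne_zero.mpr hn)]
    congr 1
    ring

/-- The continuation of the Euler double zeta function to `Re s₁ > 0`, `Re (s₁ + s₂) > 1` obtained
by comparing the inner sum over `m < n` with `ζ(s₁) - n ^ (1 - s₁) / (s₁ - 1)`. -/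
noncomputable def doubleZeta (s₁ s₂ : ℂ) : ℂ :=
  riemannZeta s₁ * riemannZeta s₂ - riemannZeta (s₁ + s₂ - 1) / (s₁ - 1)
    + LSeries (zetaPartialSumError s₁) s₂

lemma LSeriesHasSum_zetaPartialSum_doubleZeta (hs₁ : 0 < s₁.re) (hs₁1 : s₁ ≠ 1) {s₂ : ℂ}
    (h₂ : 1 < s₂.re) (h₁₂ : 2 < s₁.re + s₂.re) :
    LSeriesHasSum (zetaPartialSum s₁) s₂ (doubleZeta s₁ s₂) := by
  have hsplit : zetaPartialSum s₁ = riemannZeta s₁ • (1 : ℕ → ℂ)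
      - (s₁ - 1)⁻¹ • (fun n : ℕ => (n : ℂ) ^ (1 - s₁)) + zetaPartialSumError s₁ := by
    ext n
    simp only [zetaPartialSumError, Pi.add_apply, Pi.sub_apply, Pi.smul_apply, Pi.one_apply,
      smul_eq_mul]
    ring
  rw [hsplit, doubleZeta, div_eq_inv_mul]
  exact (((LSeriesHasSum_one h₂).smul _).sub ((LSeriesHasSum_natCast_cpow_one_sub h₁₂).smul _)).add
    (LSeriesSummable_zetaPartialSumError hs₁ hs₁1 (by linarith)).LSeriesHasSum

lemma differentiableAt_doubleZeta (hs₁ : 0 < s₁.re) (hs₁1 : s₁ ≠ 1) {s₂ : ℂ} (h₂ : s₂ ≠ 1)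
    (h₁₂ : s₁ + s₂ ≠ 2) (h : 1 - s₁.re < s₂.re) : DifferentiableAt ℂ (doubleZeta s₁) s₂ := by
  have hshift : DifferentiableAt ℂ (fun s => riemannZeta (s₁ + s - 1)) s₂ :=
    (differentiableAt_riemannZeta (by grind : s₁ + s₂ - 1 ≠ 1)).comp s₂ (by fun_prop)
  have hseries : DifferentiableAt ℂ (LSeries (zetaPartialSumError s₁)) s₂ :=
    (LSeries_hasDerivAt ((abscissaOfAbsConv_zetaPartialSumError_le hs₁ hs₁1).trans_lt
      (EReal.coe_lt_coe h))).differentiableAt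
  exact (((differentiableAt_riemannZeta h₂).const_mul _).sub (hshift.div_const _)).add hseries

lemma differentiableAt_of_not_zeta2Sing {Z : ℂ → ℂ → ℂ}
    (hZa : AnalyticOnNhd ℂ (fun p : ℂ × ℂ => Z p.1 p.2) {p | ¬ zeta2Sing p}) {s₁ s₂ : ℂ}
    (h : ¬ zeta2Sing (s₁, s₂)) : DifferentiableAt ℂ (Z s₁) s₂ :=
  (hZa (s₁, s₂) h).differentiableAt.comp (f := fun s => (s₁, s)) s₂ (by fun_prop)

lemma not_zeta2Sing_of_im_ne_zero {s₁ s₂ : ℂ} (h₂ : s₂.im ≠ 0) (h₁₂ : s₁.im + s₂.im ≠ 0) :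
    ¬ zeta2Sing (s₁, s₂) := by
  have him {s : ℂ} {x : ℝ} (hs : s.im ≠ 0) : s ≠ x := fun h => hs (h ▸ ofReal_im x)
  rw [← add_im] at h₁₂
  rintro (h | h | h | ⟨k, h⟩)
  · exact him (x := 1) h₂ (mod_cast h)
  · exact him (x := 2) h₁₂ (mod_cast h)
  · exact him (x := 1) h₁₂ (mod_cast h)
  · exact him (x := -2 * k) h₁₂ (mod_cast h)

/- The identity theorem is applied in the quarter-plane `Im s₂ > |Im s₁|`, which is connected and
avoids the singular set. -/
theorem eq_doubleZeta {Z : ℂ → ℂ → ℂ}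
    (hZa : AnalyticOnNhd ℂ (fun p : ℂ × ℂ => Z p.1 p.2) {p | ¬ zeta2Sing p})
    (hZs : ∀ s₁ s₂ : ℂ, 1 < s₂.re → 2 < s₁.re + s₂.re →
      Z s₁ s₂ = ∑' m : ℕ, ((m : ℂ) + 1) ^ (-s₁)
        * ∑' n : ℕ, (((m : ℂ) + 1) + ((n : ℂ) + 1)) ^ (-s₂))
    (hs₁ : 0 < s₁.re) (hs₁1 : s₁ ≠ 1) {s₂ : ℂ} (hre : 1 - s₁.re < s₂.re) (him : |s₁.im| < s₂.im) :
    Z s₁ s₂ = doubleZeta s₁ s₂ := by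
  set U : Set ℂ := {s | 1 - s₁.re < s.re} ∩ {s | |s₁.im| < s.im}
  have hU : IsOpen U := (isOpen_lt continuous_const continuous_re).inter
    (isOpen_lt continuous_const continuous_im)
  have hUc : IsPreconnected U :=
    ((convex_halfSpace_re_gt _).inter (convex_halfSpace_im_gt _)).isPreconnected
  have nonsingular {s : ℂ} (hs : s ∈ U) : ¬ zeta2Sing (s₁, s) := by
    have him : |s₁.im| < s.im := hs.2
    exact not_zeta2Sing_of_im_ne_zero ((abs_nonneg _).trans_lt him).ne'
      (by linarith [neg_abs_le s₁.im] : 0 < s₁.im + s.im).ne'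
  have hZ : AnalyticOnNhd ℂ (Z s₁) U := DifferentiableOn.analyticOnNhd (fun s hs =>
    (differentiableAt_of_not_zeta2Sing hZa (nonsingular hs)).differentiableWithinAt) hU
  have hD : AnalyticOnNhd ℂ (doubleZeta s₁) U := DifferentiableOn.analyticOnNhd (fun s hs =>
    (differentiableAt_doubleZeta hs₁ hs₁1 (fun h => nonsingular hs (.inl h))
      (fun h => nonsingular hs (.inr (.inl h))) hs.1).differentiableWithinAt) hU
  set w : ℂ := ⟨2, |s₁.im| + 1⟩
  have hw : w ∈ U := ⟨by change 1 - s₁.re < 2; linarith, lt_add_one |s₁.im|⟩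
  have heq : Z s₁ =ᶠ[𝓝 w] doubleZeta s₁ := by
    filter_upwards [(isOpen_lt continuous_const continuous_re).mem_nhds
      (max_lt one_lt_two (by linarith) : max 1 (2 - s₁.re) < w.re)] with s hs
    obtain ⟨h₂, h₁₂⟩ := max_lt_iff.mp hs
    rw [sub_lt_iff_lt_add'] at h₁₂
    rw [hZs s₁ s h₂ h₁₂]
    exact (LSeriesHasSum_zetaPartialSum h₂ h₁₂).unique
      (LSeriesHasSum_zetaPartialSum_doubleZeta hs₁ hs₁1 h₂ h₁₂)
  exact hZ.eqOn_of_preconnected_of_eventuallyEq hD hUc hw heq ⟨hre, him⟩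

end Continuation

section DiagonalSum

variable {s : ℂ}

lemma zetaPartialSum_eq (s : ℂ) (n : ℕ) : zetaPartialSum s n =
    riemannZeta s - (n : ℂ) ^ (1 - s) / (s - 1) + zetaPartialSumError s n := by
  rw [zetaPartialSumError]
  ring

lemma norm_natCast_cpow_one_sub_of_re_eq_one (hs : s.re = 1) {n : ℕ} (hn : n ≠ 0) :
    ‖(n : ℂ) ^ (1 - s)‖ = 1 := by
  rw [norm_natCast_cpow_of_pos (Nat.pos_of_ne_zero hn), sub_re, one_re, hs, sub_self,
    Real.rpow_zero]

lemma norm_riemannZeta_sub_cpow_div_le (hs : s.re = 1) {n : ℕ} (hn : n ≠ 0) :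
    ‖riemannZeta s - (n : ℂ) ^ (1 - s) / (s - 1)‖ ≤ ‖riemannZeta s‖ + ‖s - 1‖⁻¹ := by
  refine (norm_sub_le _ _).trans_eq ?_
  rw [norm_div, norm_natCast_cpow_one_sub_of_re_eq_one hs hn, one_div]

lemma norm_zetaPartialSumError_le_of_re_eq_one (hs : s.re = 1) (hs1 : s ≠ 1) {n : ℕ} (hn : n ≠ 0) :
    ‖zetaPartialSumError s n‖ ≤ (1 + 2 * ‖s‖ * ‖s + 1‖) / n := by
  have := norm_zetaPartialSumError_le (hs ▸ one_pos) hs1 hn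
  rwa [hs, Real.rpow_neg_one, ← div_eq_mul_inv] at this

theorem exists_norm_zetaPartialSum_le (hs : s.re = 1) (hs1 : s ≠ 1) :
    ∃ C, ∀ n, ‖zetaPartialSum s n‖ ≤ C := by
  refine ⟨‖riemannZeta s‖ + ‖s - 1‖⁻¹ + (1 + 2 * ‖s‖ * ‖s + 1‖), fun n => ?_⟩
  rcases eq_or_ne n 0 with rfl | hn
  · rw [zetaPartialSum, Finset.Ico_eq_empty (by lia), Finset.sum_empty, norm_zero]
    positivity
  have hn1 : (1 : ℝ) ≤ n := Nat.one_le_cast.mpr (Nat.one_le_iff_ne_zero.mpr hn)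
  rw [zetaPartialSum_eq]
  exact (norm_add_le _ _).trans (add_le_add (norm_riemannZeta_sub_cpow_div_le hs hn)
    ((norm_zetaPartialSumError_le_of_re_eq_one hs hs1 hn).trans (div_le_self (by positivity) hn1)))

lemma norm_sq_riemannZeta_sub_cpow_div_div (hs : s.re = 1) {n : ℕ} (hn : n ≠ 0) :
    ‖riemannZeta s - (n : ℂ) ^ (1 - s) / (s - 1)‖ ^ 2 / n =
      ((‖s - 1‖ ^ 2)⁻¹ + ‖riemannZeta s‖ ^ 2) * (n : ℝ)⁻¹
        - 2 * (conj (riemannZeta s) / (s - 1) * (n : ℂ) ^ (-s)).re := by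
  have hcross : conj (riemannZeta s) / (s - 1) * (n : ℂ) ^ (-s) =
      ((n : ℝ)⁻¹ : ℝ) * ((n : ℂ) ^ (1 - s) / (s - 1) * conj (riemannZeta s)) := by
    rw [sub_eq_add_neg 1 s, cpow_add _ _ (Nat.cast_ne_zero.mpr hn), cpow_one]
    push_cast
    field_simp
  rw [norm_sub_rev, ← normSq_eq_norm_sq, normSq_sub, normSq_eq_norm_sq, normSq_eq_norm_sq, norm_div,
    norm_natCast_cpow_one_sub_of_re_eq_one hs hn, hcross, re_ofReal_mul, one_div, inv_pow]
  ring

lemma isBigO_sum_Ico_inv_sub_log :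
    (fun N : ℕ => ∑ n ∈ Finset.Ico 1 N, (n : ℝ)⁻¹ - Real.log N) =O[atTop] fun _ => (1 : ℝ) := by
  have hlim : Tendsto (fun N : ℕ => ∑ n ∈ Finset.Ico 1 N, (n : ℝ)⁻¹ - Real.log N) atTop
      (𝓝 eulerMascheroniConstant) := by
    refine (tendsto_add_atTop_iff_nat 1).mp (tendsto_eulerMascheroniSeq.congr fun N => ?_)
    rw [eulerMascheroniSeq, harmonic, Finset.sum_Ico_eq_sum_range]
    push_cast
    simp only [add_comm]
  exact hlim.isBigO_one ℝ

lemma isBigO_sum_norm_zetaPartialSum_sq_div_sub_sum (hs : s.re = 1) (hs1 : s ≠ 1) :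
    (fun N : ℕ => ∑ n ∈ Finset.Ico 1 N, (‖zetaPartialSum s n‖ ^ 2 / n
      - ‖riemannZeta s - (n : ℂ) ^ (1 - s) / (s - 1)‖ ^ 2 / n)) =O[atTop] fun _ => (1 : ℝ) := by
  obtain ⟨C, hC⟩ := exists_norm_zetaPartialSum_le hs hs1
  set K := 1 + 2 * ‖s‖ * ‖s + 1‖
  set M := C + (‖riemannZeta s‖ + ‖s - 1‖⁻¹)
  have hsq : Summable fun n : ℕ => K * M * ((n : ℝ) ^ 2)⁻¹ :=
    (Real.summable_nat_pow_inv.mpr one_lt_two).mul_left _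
  refine IsBigO.of_bound (∑' n : ℕ, K * M * ((n : ℝ) ^ 2)⁻¹) (.of_forall fun N => ?_)
  rw [norm_one, mul_one]
  have hM : 0 ≤ M := add_nonneg ((norm_nonneg _).trans (hC 0)) (by positivity)
  refine (norm_sum_le_of_le _ fun n hn => ?_).trans
    (hsq.sum_le_tsum (Finset.Ico 1 N) fun n _ => by positivity)
  have hn0 : n ≠ 0 := Nat.one_le_iff_ne_zero.mp (Finset.mem_Ico.mp hn).1
  have herror : zetaPartialSum s n - (riemannZeta s - (n : ℂ) ^ (1 - s) / (s - 1)) =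
      zetaPartialSumError s n := sub_eq_of_eq_add' (zetaPartialSum_eq s n)
  rw [← sub_div, norm_div, Real.norm_natCast, Real.norm_eq_abs]
  calc |‖zetaPartialSum s n‖ ^ 2 - ‖riemannZeta s - (n : ℂ) ^ (1 - s) / (s - 1)‖ ^ 2| / n
    _ ≤ K / n * M / n := by
      gcongr
      refine (abs_norm_sq_sub_norm_sq_le _ _).trans (mul_le_mul ?_ ?_ (by positivity)
        (by positivity))
      · rw [herror]
        exact norm_zetaPartialSumError_le_of_re_eq_one hs hs1 hn0
      · exact add_le_add (hC n) (norm_riemannZeta_sub_cpow_div_le hs hn0)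
    _ = K * M * ((n : ℝ) ^ 2)⁻¹ := by ring

/- The cross terms sum to the partial sums of `∑ n ^ (-s)`, which are bounded although the series
diverges. -/
theorem isBigO_sum_norm_zetaPartialSum_sq_div_sub_log (hs : s.re = 1) (hs1 : s ≠ 1) :
    (fun N : ℕ => ∑ n ∈ Finset.Ico 1 N, ‖zetaPartialSum s n‖ ^ 2 / n
      - ((‖s - 1‖ ^ 2)⁻¹ + ‖riemannZeta s‖ ^ 2) * Real.log N) =O[atTop] fun _ => (1 : ℝ) := by
  obtain ⟨C, hC⟩ := exists_norm_zetaPartialSum_le hs hs1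
  have cross_terms : (fun N => (conj (riemannZeta s) / (s - 1) * zetaPartialSum s N).re)
      =O[atTop] fun _ => (1 : ℝ) :=
    IsBigO.of_bound (‖conj (riemannZeta s) / (s - 1)‖ * C) <| .of_forall fun N => by
      rw [norm_one, mul_one, Real.norm_eq_abs]
      refine (abs_re_le_norm _).trans ?_
      rw [norm_mul]
      gcongr
      exact hC N
  have expand (N : ℕ) :
      ∑ n ∈ Finset.Ico 1 N, ‖riemannZeta s - (n : ℂ) ^ (1 - s) / (s - 1)‖ ^ 2 / n =
        ((‖s - 1‖ ^ 2)⁻¹ + ‖riemannZeta s‖ ^ 2) * ∑ n ∈ Finset.Ico 1 N, (n : ℝ)⁻¹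
          - 2 * (conj (riemannZeta s) / (s - 1) * zetaPartialSum s N).re := by
    rw [zetaPartialSum, Finset.mul_sum, Finset.mul_sum, re_sum, Finset.mul_sum,
      ← Finset.sum_sub_distrib]
    exact Finset.sum_congr rfl fun n hn => norm_sq_riemannZeta_sub_cpow_div_div hs
      (Nat.one_le_iff_ne_zero.mp (Finset.mem_Ico.mp hn).1)
  refine (((isBigO_sum_norm_zetaPartialSum_sq_div_sub_sum hs hs1).add
    (isBigO_sum_Ico_inv_sub_log.const_mul_left ((‖s - 1‖ ^ 2)⁻¹ + ‖riemannZeta s‖ ^ 2))).sub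
    (cross_terms.const_mul_left 2)).congr_left fun N => ?_
  rw [Finset.sum_sub_distrib, expand]
  ring

end DiagonalSum

section Approximation

lemma sum_zetaPartialSum_mul_cpow (s₁ s₂ : ℂ) (N : ℕ) :
    ∑ n ∈ Finset.Ico 1 N, zetaPartialSum s₁ n * (n : ℂ) ^ (-s₂) =
      riemannZeta s₁ * ∑ n ∈ Finset.Ico 1 N, (n : ℂ) ^ (-s₂)
        - (∑ n ∈ Finset.Ico 1 N, (n : ℂ) ^ (-(s₁ + s₂ - 1))) / (s₁ - 1)
        + ∑ n ∈ Finset.Ico 1 N, zetaPartialSumError s₁ n * (n : ℂ) ^ (-s₂) := by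
  rw [Finset.mul_sum, Finset.sum_div, ← Finset.sum_sub_distrib, ← Finset.sum_add_distrib]
  refine Finset.sum_congr rfl fun n hn => ?_
  have hn0 : (n : ℂ) ≠ 0 :=
    Nat.cast_ne_zero.mpr (Nat.one_le_iff_ne_zero.mp (Finset.mem_Ico.mp hn).1)
  rw [zetaPartialSum_eq, (by ring : -(s₁ + s₂ - 1) = (1 - s₁) + -s₂), cpow_add _ _ hn0]
  ring

lemma norm_doubleZeta_sub_sum_le (s₁ s₂ : ℂ) (N : ℕ) :
    ‖doubleZeta s₁ s₂ - ∑ n ∈ Finset.Ico 1 N, zetaPartialSum s₁ n * (n : ℂ) ^ (-s₂)‖ ≤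
      ‖riemannZeta s₁‖ * ‖riemannZeta s₂ - ∑ n ∈ Finset.Ico 1 N, (n : ℂ) ^ (-s₂)‖
        + ‖riemannZeta (s₁ + s₂ - 1) - ∑ n ∈ Finset.Ico 1 N, (n : ℂ) ^ (-(s₁ + s₂ - 1))‖ / ‖s₁ - 1‖
        + ‖LSeries (zetaPartialSumError s₁) s₂
            - ∑ n ∈ Finset.Ico 1 N, zetaPartialSumError s₁ n * (n : ℂ) ^ (-s₂)‖ := by
  rw [← norm_mul, ← norm_div, doubleZeta, sum_zetaPartialSum_mul_cpow]
  refine le_trans (le_of_eq ?_) ((norm_add_le _ _).trans (add_le_add_left (norm_sub_le _ _) _))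
  ring_nf

lemma add_rpow_neg_quarter_le {t x : ℝ} (ht : 0 < t) (hx : -(t / 2) ≤ x) :
    (t + x) ^ (-(1 / 4) : ℝ) ≤ 2 * t ^ (-(1 / 4) : ℝ) :=
  calc (t + x) ^ (-(1 / 4) : ℝ)
    _ ≤ (t / 2 ^ (4 : ℝ)) ^ (-(1 / 4) : ℝ) :=
      Real.rpow_le_rpow_of_nonpos (by positivity) (by norm_num; linarith) (by norm_num)
    _ = 2 * t ^ (-(1 / 4) : ℝ) := by
      rw [Real.div_rpow ht.le (by positivity), ← Real.rpow_mul zero_le_two,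
        div_eq_mul_inv, ← Real.rpow_neg zero_le_two, mul_comm]
      norm_num

lemma norm_LSeries_zetaPartialSumError_sub_sum_le {s₁ s₂ : ℂ} (hs₁ : s₁.re = 1) (hs₁1 : s₁ ≠ 1)
    (hs₂ : s₂.re = 1 / 2) {t : ℝ} (ht : 0 < t) {N : ℕ} (hN : t ≤ N) :
    ‖LSeries (zetaPartialSumError s₁) s₂
      - ∑ n ∈ Finset.Ico 1 N, zetaPartialSumError s₁ n * (n : ℂ) ^ (-s₂)‖ ≤
        t ^ (-(1 / 4) : ℝ) * ∑' n, ‖LSeries.term (zetaPartialSumError s₁) (1 / 4 : ℝ) n‖ := by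
  have hsummable : LSeriesSummable (zetaPartialSumError s₁) (1 / 4 : ℝ) :=
    LSeriesSummable_zetaPartialSumError (hs₁ ▸ one_pos) hs₁1 (by rw [hs₁, ofReal_re]; norm_num)
  have hN0 : 0 < N := Nat.cast_pos.mp (ht.trans_le hN)
  refine (norm_LSeries_sub_sum_Ico_le hsummable (by rw [hs₂, ofReal_re]; norm_num) hN0).trans
    (mul_le_mul_of_nonneg_right ?_ (tsum_nonneg fun _ => norm_nonneg _))
  rw [hs₂, ofReal_re, (by norm_num : (1 / 4 - 1 / 2 : ℝ) = -(1 / 4))]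
  exact Real.rpow_le_rpow_of_nonpos ht hN (by norm_num)

theorem exists_eventually_norm_doubleZeta_sub_sum_le {s₁ : ℂ} (hs₁ : s₁.re = 1) (hs₁1 : s₁ ≠ 1) :
    ∃ K : ℝ, ∀ᶠ t : ℝ in atTop, ∀ N : ℕ, 4 * t ≤ N → N ≤ 9 * t →
      ‖doubleZeta s₁ ((1 / 2 : ℂ) + t * I)
        - ∑ n ∈ Finset.Ico 1 N, zetaPartialSum s₁ n * (n : ℂ) ^ (-((1 / 2 : ℂ) + t * I))‖ ≤
          K * t ^ (-(1 / 4) : ℝ) := by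
  set L := ∑' n, ‖LSeries.term (zetaPartialSumError s₁) (1 / 4 : ℝ) n‖
  refine ⟨‖riemannZeta s₁‖ * 1070 + 2 * 1070 / ‖s₁ - 1‖ + L, ?_⟩
  filter_upwards [eventually_ge_atTop 2, eventually_ge_atTop (10 * |s₁.im|)] with t ht ht₁ N hN hN'
  obtain ⟨him, him'⟩ : -(t / 10) ≤ s₁.im ∧ s₁.im ≤ t / 10 := abs_le.mp (by linarith)
  set s₂ : ℂ := (1 / 2 : ℂ) + t * I with hs₂
  have hre : s₂.re = 1 / 2 := by simp [hs₂]
  have him₂ : s₂.im = t := by simp [hs₂]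
  have hre' : (s₁ + s₂ - 1).re = 1 / 2 := by simp [hs₁, hre]
  have him₂' : (s₁ + s₂ - 1).im = t + s₁.im := by simp [him₂, add_comm]
  have hzeta : ‖riemannZeta s₂ - ∑ n ∈ Finset.Ico 1 N, (n : ℂ) ^ (-s₂)‖ ≤
      1070 * t ^ (-(1 / 4) : ℝ) := by
    simpa only [him₂] using
      norm_riemannZeta_sub_sum_Ico_le (N := N) hre (by linarith) (by linarith) (by linarith)
  have hshift : ‖riemannZeta (s₁ + s₂ - 1) - ∑ n ∈ Finset.Ico 1 N, (n : ℂ) ^ (-(s₁ + s₂ - 1))‖ ≤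
      1070 * (2 * t ^ (-(1 / 4) : ℝ)) :=
    (norm_riemannZeta_sub_sum_Ico_le hre' (by linarith) (by linarith) (by linarith)).trans
      (by rw [him₂']; gcongr; exact add_rpow_neg_quarter_le (by linarith) (by linarith))
  have htail := norm_LSeries_zetaPartialSumError_sub_sum_le hs₁ hs₁1 hre
    (by linarith : 0 < t) (by linarith : t ≤ N)
  calc _ ≤ ‖riemannZeta s₁‖ * (1070 * t ^ (-(1 / 4) : ℝ))
        + 1070 * (2 * t ^ (-(1 / 4) : ℝ)) / ‖s₁ - 1‖ + t ^ (-(1 / 4) : ℝ) * L :=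
      (norm_doubleZeta_sub_sum_le s₁ s₂ N).trans (by gcongr)
    _ = (‖riemannZeta s₁‖ * 1070 + 2 * 1070 / ‖s₁ - 1‖ + L) * t ^ (-(1 / 4) : ℝ) := by ring

end Approximation

/-- Mean square of ζ₂ in t₂ for σ₁ = 1, s₁ ≠ 1, σ₂ = 1/2 (from Theorem 1.2). -/
theorem stmt18 (Z : ℂ → ℂ → ℂ)
    (hZa : AnalyticOnNhd ℂ (fun p : ℂ × ℂ => Z p.1 p.2) {p | ¬ zeta2Sing p})
    (hZs : ∀ s₁ s₂ : ℂ, 1 < s₂.re → 2 < s₁.re + s₂.re →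
      Z s₁ s₂ = ∑' m : ℕ, ((m : ℂ) + 1) ^ (-s₁)
        * ∑' n : ℕ, (((m : ℂ) + 1) + ((n : ℂ) + 1)) ^ (-s₂))
    (s₁ : ℂ) (h1 : s₁.re = 1) (h2 : s₁ ≠ 1)
    (hsing : ∀ t₂ : ℝ, 2 ≤ t₂ → ¬ zeta2Sing (s₁, ((1/2 : ℂ) + t₂ * Complex.I))) :
    (fun T : ℝ =>
        (∫ t in (2:ℝ)..T, ‖Z s₁ ((1/2 : ℂ) + t * Complex.I)‖ ^ 2)
          - ((‖s₁ - 1‖ ^ 2)⁻¹ + ‖riemannZeta s₁‖ ^ 2) * T * Real.log T)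
      =O[atTop] (fun T : ℝ => T) := by
  have hcont : ContinuousOn (fun t : ℝ => Z s₁ ((1 / 2 : ℂ) + t * I)) (Set.Ici 2) := fun t ht =>
    ((differentiableAt_of_not_zeta2Sing hZa (hsing t ht)).continuousAt.comp
      (f := fun t : ℝ => (1 / 2 : ℂ) + t * I) (by fun_prop)).continuousWithinAt
  obtain ⟨C, hC⟩ := exists_norm_zetaPartialSum_le h1 h2
  obtain ⟨K, hK⟩ := exists_eventually_norm_doubleZeta_sub_sum_le h1 h2
  refine isBigO_integral_norm_sq_sub_of_approx (K := K) hcont hC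
    (isBigO_sum_norm_zetaPartialSum_sq_div_sub_log h1 h2) ?_
  filter_upwards [hK, eventually_gt_atTop |s₁.im|] with t hKt ht
  have hZ : Z s₁ ((1 / 2 : ℂ) + t * I) = doubleZeta s₁ ((1 / 2 : ℂ) + t * I) :=
    eq_doubleZeta hZa hZs (h1 ▸ one_pos) h2 (by simp [h1]) (by simpa using ht)
  rwa [hZ]
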